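/- arXiv:2210.12405 — 2 statements merged into one kernel-verified Lean document; each statement's English description precedes it below -/
import Mathlib

section
/- Let A be a d-dimensional extremal (0,1)-matrix of order 2 that admits an optimal hyperplane cover whose positive entries take at most two distinct values (i.e., A has diversity at most 2). Then: the deficiency of A equals 1/q for some positive integer q; the optimal hyperplane cover of A is unique; and every entry of the optimal hyperplane cover of A is an integer multiple of the deficiency of A. -/
open Finset

/-- The sum of the entries of `k` over the hyperplane `Γ_{i,j}`. -/
def hypSum {d n : ℕ} (k : (Fin d → Fin n) → ℝ) (i : Fin d) (j : Fin n) : ℝ :=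
  ∑ α ∈ Finset.univ.filter (fun α : Fin d → Fin n => α i = j), k α

/-- `k` is a polyplex of weight `W` in the `d`-dimensional (0,1)-matrix `A` of order `n`. -/
def IsPolyplex {d n : ℕ} (A : (Fin d → Fin n) → Bool) (k : (Fin d → Fin n) → ℝ) (W : ℝ) : Prop :=
  (∀ α, 0 ≤ k α) ∧ (∀ α, A α = false → k α = 0) ∧
  (∀ i j, hypSum k i j ≤ 1) ∧ (∑ α, k α) = W

/-- `k` is a polydiagonal in `A`: a nonnegative weighting of the support whose sum over
every hyperplane equals `1`. -/
def IsPolydiagonal {d n : ℕ} (A : (Fin d → Fin n) → Bool) (k : (Fin d → Fin n) → ℝ) : Prop :=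
  (∀ α, 0 ≤ k α) ∧ (∀ α, A α = false → k α = 0) ∧ (∀ i j, hypSum k i j = 1)

def HasPolydiagonal {d n : ℕ} (A : (Fin d → Fin n) → Bool) : Prop :=
  ∃ k, IsPolydiagonal A k

/-- The matrix obtained from `A` by additionally setting the entry at `β` to `1`. -/
def addEntry {d n : ℕ} (A : (Fin d → Fin n) → Bool) (β : Fin d → Fin n) :
    (Fin d → Fin n) → Bool :=
  fun α => if α = β then true else A α

/-- `A` is extremal: it has no polydiagonal, and adding any entry creates one. -/
def IsExtremal {d n : ℕ} (A : (Fin d → Fin n) → Bool) : Prop :=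
  ¬ HasPolydiagonal A ∧ ∀ β, A β = false → HasPolydiagonal (addEntry A β)

/-- `Λ` is a hyperplane cover of `A`. -/
def IsCover {d n : ℕ} (A : (Fin d → Fin n) → Bool) (Λ : Fin d → Fin n → ℝ) : Prop :=
  (∀ i j, 0 ≤ Λ i j) ∧ ∀ α, A α = true → 1 ≤ ∑ i, Λ i (α i)

/-- The weight of a hyperplane cover. -/
def coverWeight {d n : ℕ} (Λ : Fin d → Fin n → ℝ) : ℝ := ∑ i, ∑ j, Λ i j

/-- `Λ` is an optimal hyperplane cover of `A`: a cover of minimum weight. -/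
def IsOptimalCover {d n : ℕ} (A : (Fin d → Fin n) → Bool) (Λ : Fin d → Fin n → ℝ) : Prop :=
  IsCover A Λ ∧ ∀ Λ', IsCover A Λ' → coverWeight Λ ≤ coverWeight Λ'

/-- `A` is a threshold matrix. -/
def IsThreshold {d n : ℕ} (A : (Fin d → Fin n) → Bool) : Prop :=
  ∃ Λ : Fin d → Fin n → ℝ, (∀ i j, 0 ≤ Λ i j) ∧
    ∀ α, (A α = true ↔ 1 ≤ ∑ i, Λ i (α i))

/-- `A` and `B` are equivalent: `B` is obtained from `A` by permuting directions and
permuting parallel hyperplanes, i.e. `B(α) = A(β)` where `β (π i) = σ i (α i)`. -/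
def MatEquiv {d n : ℕ} (A B : (Fin d → Fin n) → Bool) : Prop :=
  ∃ (π : Equiv.Perm (Fin d)) (σ : Fin d → Equiv.Perm (Fin n)),
    ∀ α, B α = A (fun j => σ (π.symm j) (α (π.symm j)))

/-- The rate of the hyperplane `Γ_{i,j}` of `A`: the number of ones it contains. -/
def rate {d n : ℕ} (A : (Fin d → Fin n) → Bool) (i : Fin d) (j : Fin n) : ℕ :=
  (Finset.univ.filter (fun α : Fin d → Fin n => A α = true ∧ α i = j)).card

/-- The profile of `A`: the multiset of the rates of all its `d·n` hyperplanes. -/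
def profile {d n : ℕ} (A : (Fin d → Fin n) → Bool) : Multiset ℕ :=
  (Finset.univ : Finset (Fin d × Fin n)).val.map (fun p => rate A p.1 p.2)

/-!
Fix for every direction the heavier of the two parallel hyperplanes of an optimal cover `Λ₀`. An
index then becomes the set `S` of directions in which it uses the heavier one, and after dividing
the differences of parallel entries by the deficiency, `Λ₀` becomes a nonnegative weighting `w` of
the directions for which the indices of the support are those with `1 ≤ signedSum w S`. By linear
programming duality the deficiency is positive, optimality of `Λ₀` says that `w` has least total
weight, and extremality says that every other index has signed sum at most `-1`.

Suppose `w` takes the values `a` on `G` and `b` on `H`. Signed sums depend only on the numbers of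
elements of `G` and `H` in `S`, so the condition that no signed sum lies in `(-1, 1)` is a statement
about lattice points in a box. Minimality provides tight sets (signed sum `1`) on which `G` and `H`
prevail in turn. If `(u, -v)` is the primitive vector along the segment joining their lattice
points, the weights are `(a, b) = l • (v, u)` for some `l > 0`, and a parallelogram argument forces
`l = 1`.

For uniqueness, a competing optimal cover gives a perturbation `h` of `w` that is nonnegative on
tight sets and does not increase the total weight. Averaging `h` over `G` and over `H` forces both
averages to vanish, and a tight set that meets `G` in a proper nonempty part forces `h` to be
constant on `G`.
-/

open Filter
open scoped BigOperators Topology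

section Lattice

lemma exists_int_point_on_segment {u v t : ℤ} (hu : 0 < u) (hv : 0 < v) (huv : IsCoprime u v)
    {X Y : ℝ} (hXY : X * v + Y * u = t) :
    ∃ x y : ℤ, x * v + y * u = t ∧ X - u ≤ x ∧ x ≤ X ∧ Y ≤ y ∧ y ≤ Y + v := by
  obtain ⟨r, s, hrs⟩ := huv
  have hu' : (0 : ℝ) < u := mod_cast hu
  have hv' : (0 : ℝ) < v := mod_cast hv
  obtain ⟨k, ⟨hk_lower, hk_upper⟩, -⟩ := existsUnique_add_zsmul_mem_Ioc hu' (t * s : ℝ) (X - u)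
  obtain ⟨x, hx⟩ : ∃ x, x = t * s + k * u := ⟨_, rfl⟩
  obtain ⟨y, hy⟩ : ∃ y, y = t * r - k * v := ⟨_, rfl⟩
  have hline : x * v + y * u = t := by rw [hx, hy]; linear_combination t * hrs
  have hx' : (t * s : ℝ) + k • (u : ℝ) = x := by rw [hx, zsmul_eq_mul]; push_cast; rfl
  rw [hx'] at hk_lower
  rw [hx', sub_add_cancel] at hk_upper
  have hshift : (y - Y) * u = (X - x) * v := by
    have : (x * v + y * u : ℝ) = t := mod_cast hline
    linear_combination this - hXY
  refine ⟨x, y, hline, hk_lower.le, hk_upper, ?_, ?_⟩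
  · have : 0 ≤ (y - Y) * u := hshift ▸ mul_nonneg (by linarith) hv'.le
    linarith [nonneg_of_mul_nonneg_left this hu']
  · have : (y - Y) * u ≤ v * u := by rw [hshift]; nlinarith
    linarith [le_of_mul_le_mul_right this hu']

-- Let `P = (x, y)` and `Q = (x - u, y + v)`, both at level `m`. Together with their reflections in
-- the centre of the box they span a parallelogram inside the box. It meets the line of level
-- `m - 2` in a translate of the segment `PQ`, and every translate of `PQ` on such a line contains a
-- lattice point.
lemma exists_int_point_in_box_of_level_sub_two {n₁ n₂ x y u v m : ℤ}
    (hu : 0 < u) (hv : 0 < v) (huv : IsCoprime u v) (hux : u ≤ x) (hx : x ≤ n₁)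
    (hy : 0 ≤ y) (hyv : y + v ≤ n₂) (hm : 0 < m)
    (hlevel : (2 * x - n₁) * v + (2 * y - n₂) * u = m) :
    ∃ x' ∈ Set.Icc 0 n₁, ∃ y' ∈ Set.Icc 0 n₂,
      (2 * x' - n₁) * v + (2 * y' - n₂) * u = m - 2 := by
  have hm' : (0 : ℝ) < m := mod_cast hm
  have hm₁ : (0 : ℝ) ≤ m - 1 := by exact_mod_cast Int.sub_nonneg_of_le hm
  have hux' : (u : ℝ) ≤ x := mod_cast hux
  have hx' : (x : ℝ) ≤ n₁ := mod_cast hx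
  have hy' : (0 : ℝ) ≤ y := mod_cast hy
  have hyv' : (y + v : ℝ) ≤ n₂ := mod_cast hyv
  obtain ⟨X, hX⟩ : ∃ X : ℝ, m * X = (m - 1) * x + (n₁ - (x - u)) := ⟨_, mul_div_cancel₀ _ hm'.ne'⟩
  obtain ⟨Y, hY⟩ : ∃ Y : ℝ, m * Y = (m - 1) * y + (n₂ - (y + v)) := ⟨_, mul_div_cancel₀ _ hm'.ne'⟩
  have hXY : X * v + Y * u = ((x * v + y * u - 1 : ℤ) : ℝ) := by
    refine mul_left_cancel₀ hm'.ne' ?_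
    have : ((2 * x - n₁) * v + (2 * y - n₂) * u : ℝ) = m := mod_cast hlevel
    push_cast
    linear_combination v * hX + u * hY - this
  obtain ⟨x', y', hline, hx'_lower, hx'_upper, hy'_lower, hy'_upper⟩ :=
    exists_int_point_on_segment hu hv huv hXY
  have hX_upper : X ≤ n₁ := le_of_mul_le_mul_left (by nlinarith) hm'
  have hX_lower : 0 ≤ X - u := nonneg_of_mul_nonneg_right (by nlinarith) hm'
  have hY_lower : 0 ≤ Y := nonneg_of_mul_nonneg_right (by nlinarith) hm'
  have hY_upper : Y + v ≤ n₂ := le_of_mul_le_mul_left (by nlinarith) hm'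
  refine ⟨x', ⟨?_, ?_⟩, y', ⟨?_, ?_⟩, by linear_combination 2 * hline + hlevel⟩
  · exact_mod_cast hX_lower.trans hx'_lower
  · exact_mod_cast hx'_upper.trans hX_upper
  · exact_mod_cast hY_lower.trans hy'_lower
  · exact_mod_cast hy'_upper.trans hY_upper

lemma exists_isCoprime_mul_eq_mul {p q : ℤ} (hp : 0 < p) (hq : 0 < q) {a b : ℝ}
    (hab : p * a = q * b) :
    ∃ u v : ℤ, 0 < u ∧ 0 < v ∧ IsCoprime u v ∧ u ≤ p ∧ v ≤ q ∧ u * a = v * b := by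
  have hg : 0 < Int.gcd p q := Int.gcd_pos_of_ne_zero_left _ hp.ne'
  obtain ⟨u, v, huv, hpu, hqv⟩ := Int.exists_gcd_one hg
  obtain ⟨g, hg_eq⟩ : ∃ g : ℤ, g = Int.gcd p q := ⟨_, rfl⟩
  rw [← hg_eq] at hpu hqv
  have hg' : 0 < g := by omega
  have hu : 0 < u := pos_of_mul_pos_left (hpu ▸ hp) hg'.le
  have hv : 0 < v := pos_of_mul_pos_left (hqv ▸ hq) hg'.le
  refine ⟨u, v, hu, hv, Int.isCoprime_iff_gcd_eq_one.2 huv, ?_, ?_, ?_⟩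
  · rw [hpu]; exact le_mul_of_one_le_right hu.le hg'
  · rw [hqv]; exact le_mul_of_one_le_right hv.le hg'
  · refine mul_left_cancel₀ (Int.cast_ne_zero.2 hg'.ne' : (g : ℝ) ≠ 0) ?_
    rw [hpu, hqv] at hab
    push_cast at hab
    linear_combination hab

lemma exists_int_coeffs_of_opposed_tight {n₁ n₂ x₁ y₁ x₂ y₂ : ℤ} {a b : ℝ} (hb : 0 < b)
    (hbox : ∀ x ∈ Set.Icc 0 n₁, ∀ y ∈ Set.Icc 0 n₂,
      1 ≤ |(2 * x - n₁) * a + (2 * y - n₂) * b|)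
    (hx₂ : 0 ≤ x₂) (hx : x₂ < x₁) (hx₁ : x₁ ≤ n₁) (hy₁ : 0 ≤ y₁) (hy : y₁ < y₂) (hy₂ : y₂ ≤ n₂)
    (htight₁ : (2 * x₁ - n₁) * a + (2 * y₁ - n₂) * b = 1)
    (htight₂ : (2 * x₂ - n₁) * a + (2 * y₂ - n₂) * b = 1) :
    ∃ u v : ℤ, 0 < u ∧ 0 < v ∧ u ≤ x₁ - x₂ ∧ v ≤ y₂ - y₁ ∧ a = v ∧ b = u := by
  obtain ⟨u, v, hu, hv, huv, hux, hvy, hratio⟩ :=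
    exists_isCoprime_mul_eq_mul (sub_pos.2 hx) (sub_pos.2 hy) (a := a) (b := b)
      (by push_cast; linear_combination (htight₁ - htight₂) / 2)
  have hu' : (0 : ℝ) < u := mod_cast hu
  obtain ⟨l, hl⟩ : ∃ l : ℝ, b = l * u := ⟨b / u, (div_mul_cancel₀ _ hu'.ne').symm⟩
  have hl_pos : 0 < l := pos_of_mul_pos_left (hl ▸ hb) hu'.le
  have ha : a = l * v := mul_left_cancel₀ hu'.ne' (by rw [hratio, hl]; ring)
  obtain ⟨m, hm⟩ : ∃ m : ℤ, (2 * x₁ - n₁) * v + (2 * y₁ - n₂) * u = m := ⟨_, rfl⟩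
  have hlm : l * m = 1 := by
    rw [← hm, ← htight₁, ha, hl]; push_cast; ring
  have hm_pos : 0 < m := by
    exact_mod_cast pos_of_mul_pos_right (hlm ▸ one_pos : 0 < l * (m : ℝ)) hl_pos.le
  have hm_le_one : m ≤ 1 := by
    by_contra! hm_two
    obtain ⟨x, hx, y, hy, hlevel⟩ := exists_int_point_in_box_of_level_sub_two hu hv huv
      (by omega) hx₁ hy₁ (by omega) hm_pos hm
    have hvalue : (2 * x - n₁) * a + (2 * y - n₂) * b = 1 - 2 * l := by
      have : ((2 * x - n₁) * v + (2 * y - n₂) * u : ℝ) = m - 2 := mod_cast hlevel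
      rw [ha, hl]; linear_combination l * this + hlm
    have hm_two' : (2 : ℝ) ≤ m := mod_cast hm_two
    have hbad := hbox x hx y hy
    rw [hvalue, le_abs'] at hbad
    rcases hbad with h | h <;> nlinarith
  obtain rfl : m = 1 := by omega
  obtain rfl : l = 1 := by simpa using hlm
  exact ⟨u, v, hu, hv, hux, hvy, by rw [ha, one_mul], by rw [hl, one_mul]⟩

lemma eq_one_or_mem_Ioo_of_int_tight {n₁ n₂ x y u v : ℤ} (hu : 0 < u) (hux : u ≤ x) (hx : x ≤ n₁)
    (htight : (2 * x - n₁) * v + (2 * y - n₂) * u = 1) :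
    n₁ = 1 ∨ x ∈ Set.Ioo 0 n₁ ∨ x - u ∈ Set.Ioo 0 n₁ := by
  by_contra! h
  simp only [Set.mem_Ioo] at h
  obtain rfl : x = n₁ := by omega
  obtain rfl : u = x := by omega
  have hdvd : u ∣ 1 := ⟨v + (2 * y - n₂), by linear_combination -htight⟩
  exact h.1 (Int.eq_one_of_dvd_one hu.le hdvd)

end Lattice

section Averaging

variable {ι : Type*}

lemma exists_subset_card_eq_forall_le [DecidableEq ι] (G : Finset ι) (h : ι → ℝ) {x : ℕ}
    (hx : x ≤ #G) : ∃ S ⊆ G, #S = x ∧ ∀ i ∈ S, ∀ j ∈ G \ S, h i ≤ h j := by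
  obtain ⟨S, hS, hS_min⟩ :=
    exists_min_image (G.powersetCard x) (fun S ↦ ∑ i ∈ S, h i) (powersetCard_nonempty.2 hx)
  obtain ⟨hSG, hSx⟩ := mem_powersetCard.1 hS
  refine ⟨S, hSG, hSx, fun i hi j hj ↦ ?_⟩
  obtain ⟨hjG, hjS⟩ := mem_sdiff.1 hj
  have hj_erase : j ∉ S.erase i := fun hj' ↦ hjS (mem_of_mem_erase hj')
  have hswap_mem : insert j (S.erase i) ∈ G.powersetCard x := by
    rw [mem_powersetCard, card_insert_of_notMem hj_erase, card_erase_add_one hi]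
    exact ⟨insert_subset hjG ((erase_subset i S).trans hSG), hSx⟩
  have hswap := hS_min _ hswap_mem
  rw [sum_insert hj_erase, ← add_sum_erase S h hi] at hswap
  exact le_of_add_le_add_right hswap

lemma sum_sum_sdiff_sub_eq [DecidableEq ι] {S G : Finset ι} (hSG : S ⊆ G) (h : ι → ℝ) :
    ∑ i ∈ S, ∑ j ∈ G \ S, (h j - h i) = #G * (#S * (𝔼 i ∈ G, h i) - ∑ i ∈ S, h i) := by
  have hsum : ∑ j ∈ G \ S, h j = ∑ j ∈ G, h j - ∑ j ∈ S, h j := sum_sdiff_eq_sub hSG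
  have hcard : (#(G \ S) : ℝ) = #G - #S := by
    rw [card_sdiff_of_subset hSG, Nat.cast_sub (card_le_card hSG)]
  simp only [sum_sub_distrib, sum_const, nsmul_eq_mul, hsum, hcard, ← mul_sum,
    ← card_mul_expect G h]
  ring

lemma exists_subset_card_eq_sum_le_expect (G : Finset ι) (h : ι → ℝ) {x : ℕ} (hx : x ≤ #G) :
    ∃ S ⊆ G, #S = x ∧ ∑ i ∈ S, h i ≤ x * 𝔼 i ∈ G, h i := by
  classical
  obtain ⟨S, hSG, rfl, hle⟩ := exists_subset_card_eq_forall_le G h hx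
  refine ⟨S, hSG, rfl, ?_⟩
  obtain rfl | hG := G.eq_empty_or_nonempty
  · simp [subset_empty.1 hSG]
  have hcross : 0 ≤ ∑ i ∈ S, ∑ j ∈ G \ S, (h j - h i) :=
    sum_nonneg fun i hi ↦ sum_nonneg fun j hj ↦ sub_nonneg.2 (hle i hi j hj)
  rw [sum_sum_sdiff_sub_eq hSG] at hcross
  exact sub_nonneg.1 (nonneg_of_mul_nonneg_right hcross (mod_cast hG.card_pos))

lemma exists_subset_card_eq_sum_lt_expect {G : Finset ι} {h : ι → ℝ} {x : ℕ} (hx₀ : 0 < x)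
    (hx : x < #G) {i j : ι} (hi : i ∈ G) (hj : j ∈ G) (hij : h i ≠ h j) :
    ∃ S ⊆ G, #S = x ∧ ∑ i ∈ S, h i < x * 𝔼 i ∈ G, h i := by
  classical
  obtain ⟨S, hSG, rfl, hle⟩ := exists_subset_card_eq_forall_le G h hx.le
  refine ⟨S, hSG, rfl, ?_⟩
  have hnonneg : ∀ k ∈ S, ∀ l ∈ G \ S, 0 ≤ h l - h k :=
    fun k hk l hl ↦ sub_nonneg.2 (hle k hk l hl)
  obtain ⟨k, hk, l, hl, hkl⟩ : ∃ k ∈ S, ∃ l ∈ G \ S, h k ≠ h l := by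
    by_contra! hconst
    obtain ⟨k, hk⟩ := card_pos.1 hx₀
    obtain ⟨l, hl⟩ := sdiff_nonempty_of_card_lt_card hx
    have hG_const : ∀ m ∈ G, h m = h k := fun m hm ↦
      if hmS : m ∈ S then (hconst m hmS l hl).trans (hconst k hk l hl).symm
      else (hconst k hk m (mem_sdiff.2 ⟨hm, hmS⟩)).symm
    exact hij ((hG_const i hi).trans (hG_const j hj).symm)
  have hcross : 0 < ∑ i ∈ S, ∑ j ∈ G \ S, (h j - h i) :=
    sum_pos' (fun k hk ↦ sum_nonneg (hnonneg k hk))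
      ⟨k, hk, sum_pos' (hnonneg k hk)
        ⟨l, hl, sub_pos.2 ((hle k hk l hl).lt_of_ne hkl)⟩⟩
  rw [sum_sum_sdiff_sub_eq hSG] at hcross
  exact sub_pos.1 (pos_of_mul_pos_right hcross (Nat.cast_nonneg _))

lemma exists_card_inter_eq [DecidableEq ι] {G H : Finset ι} (hGH : Disjoint G H) {x y : ℕ}
    (hx : x ≤ #G) (hy : y ≤ #H) : ∃ S : Finset ι, #(S ∩ G) = x ∧ #(S ∩ H) = y := by
  obtain ⟨S₁, hS₁, rfl⟩ := exists_subset_card_eq hx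
  obtain ⟨S₂, hS₂, rfl⟩ := exists_subset_card_eq hy
  refine ⟨S₁ ∪ S₂, ?_, ?_⟩
  · rw [union_inter_distrib_right, inter_eq_left.2 hS₁,
      disjoint_iff_inter_eq_empty.1 (hGH.symm.mono_left hS₂), union_empty]
  · rw [union_inter_distrib_right, inter_eq_left.2 hS₂,
      disjoint_iff_inter_eq_empty.1 (hGH.mono_left hS₁), empty_union]

end Averaging

section SignedSum

variable {ι : Type*} [Fintype ι]

/-- The sum of the weights `w` in which the elements of `S` count with sign `+` and all others with
sign `-`, written so that no complement occurs. -/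
def signedSum (w : ι → ℝ) (S : Finset ι) : ℝ := 2 * ∑ i ∈ S, w i - ∑ i, w i

/-- No signed sum of `w` lies strictly between `-1` and `1`: read as a voting game in which `S` wins
when `1 ≤ signedSum w S`, exactly one of `S` and its complement wins. -/
def IsDecisive (w : ι → ℝ) : Prop := ∀ S, 1 ≤ |signedSum w S|

/-- Every `S` that wins under `w` also wins under `w'`. -/
def PreservesWinning (w w' : ι → ℝ) : Prop := ∀ S, 1 ≤ signedSum w S → 1 ≤ signedSum w' S

/-- `w` has least total absolute weight among all weightings with at least the same winning
sets. -/
def IsMinimalWeighting (w : ι → ℝ) : Prop :=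
  ∀ w', PreservesWinning w w' → ∑ i, |w i| ≤ ∑ i, |w' i|

lemma signedSum_add (w h : ι → ℝ) (S : Finset ι) :
    signedSum (fun i ↦ w i + h i) S = signedSum w S + signedSum h S := by
  simp only [signedSum, sum_add_distrib]; ring

lemma signedSum_sub (w h : ι → ℝ) (S : Finset ι) :
    signedSum (fun i ↦ w i - h i) S = signedSum w S - signedSum h S := by
  simp only [signedSum, sum_sub_distrib]; ring

lemma signedSum_const_mul (c : ℝ) (w : ι → ℝ) (S : Finset ι) :
    signedSum (fun i ↦ c * w i) S = c * signedSum w S := by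
  simp only [signedSum, ← mul_sum]; ring

lemma signedSum_eq_sum_ite [DecidableEq ι] (w : ι → ℝ) (S : Finset ι) :
    signedSum w S = ∑ i, if i ∈ S then w i else -w i := by
  have hS : ∑ i ∈ S, w i = ∑ i, if i ∈ S then w i else 0 := by rw [sum_ite_mem, univ_inter]
  rw [signedSum, hS, mul_sum, ← sum_sub_distrib]
  refine sum_congr rfl fun i _ ↦ ?_
  split_ifs <;> ring

lemma IsDecisive.one_le_of_mem {w : ι → ℝ} (hw : IsDecisive w) {S : Finset ι}
    (hS : signedSum w S = 1) {i : ι} (hi : i ∈ S) (hi_pos : 0 < w i) : 1 ≤ w i := by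
  classical
  have herase : signedSum w (S.erase i) = 1 - 2 * w i := by
    rw [← hS, signedSum, signedSum, ← add_sum_erase S w hi]; ring
  rcases le_abs'.1 (herase ▸ hw (S.erase i)) with h | h <;> linarith

lemma eventually_le_add_mul {c x y : ℝ} (hcx : c ≤ x) (hy : x = c → 0 ≤ y) :
    ∀ᶠ ε in 𝓝[>] (0 : ℝ), c ≤ x + ε * y := by
  rcases hcx.eq_or_lt with rfl | hlt
  · filter_upwards [self_mem_nhdsWithin] with ε hε
    exact le_add_of_nonneg_right (mul_nonneg (le_of_lt hε) (hy rfl))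
  · have hcont : Tendsto (fun ε : ℝ ↦ x + ε * y) (𝓝 0) (𝓝 x) := by
      simpa using (Continuous.tendsto (f := fun ε : ℝ ↦ x + ε * y) (by fun_prop) 0)
    exact ((hcont.eventually_const_lt hlt).filter_mono nhdsWithin_le_nhds).mono fun _ ↦ le_of_lt

lemma IsMinimalWeighting.sum_nonneg_of_tight {w h : ι → ℝ} (hw : IsMinimalWeighting w)
    (hw₀ : ∀ i, 0 ≤ w i) (hh : ∀ i, w i = 0 → 0 ≤ h i)
    (htight : ∀ S, signedSum w S = 1 → 0 ≤ signedSum h S) : 0 ≤ ∑ i, h i := by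
  have hwinning : ∀ᶠ ε in 𝓝[>] (0 : ℝ), ∀ S, 1 ≤ signedSum w S →
      1 ≤ signedSum w S + ε * signedSum h S := by
    refine eventually_all.2 fun S ↦ ?_
    by_cases hS : 1 ≤ signedSum w S
    · filter_upwards [eventually_le_add_mul hS (htight S)] with ε hε _ using hε
    · exact .of_forall fun _ hS' ↦ absurd hS' hS
  have hnonneg : ∀ᶠ ε in 𝓝[>] (0 : ℝ), ∀ i, 0 ≤ w i + ε * h i :=
    eventually_all.2 fun i ↦ eventually_le_add_mul (hw₀ i) (hh i)
  obtain ⟨ε, hε_winning, hε_nonneg, hε⟩ :=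
    (hwinning.and (hnonneg.and self_mem_nhdsWithin)).exists
  have hle := hw (fun i ↦ w i + ε * h i) fun S hS ↦ by
    rw [signedSum_add, signedSum_const_mul]; exact hε_winning S hS
  simp only [abs_of_nonneg (hw₀ _), abs_of_nonneg (hε_nonneg _), sum_add_distrib, ← mul_sum] at hle
  exact nonneg_of_mul_nonneg_right (le_add_iff_nonneg_right _ |>.1 hle) hε

variable [DecidableEq ι] {G H : Finset ι}

lemma sum_eq_sum_add_sum_add_sum_compl_union (hGH : Disjoint G H) (f : ι → ℝ) :
    ∑ i, f i = ∑ i ∈ G, f i + ∑ i ∈ H, f i + ∑ i ∈ (G ∪ H)ᶜ, f i := by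
  rw [← sum_union hGH, sum_add_sum_compl]

lemma exists_signedSum_eq_of_subset (hGH : Disjoint G H) (h : ι → ℝ) {S₁ S₂ : Finset ι}
    (hS₁ : S₁ ⊆ G) (hS₂ : S₂ ⊆ H) :
    ∃ T, T ∩ G = S₁ ∧ T ∩ H = S₂ ∧ signedSum h T =
      (2 * ∑ i ∈ S₁, h i - ∑ i ∈ G, h i) + (2 * ∑ i ∈ S₂, h i - ∑ i ∈ H, h i)
        - ∑ i ∈ (G ∪ H)ᶜ, |h i| := by
  set N := (G ∪ H)ᶜ.filter (h · < 0) with hN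
  have hdisj : Disjoint (S₁ ∪ S₂) N :=
    disjoint_compl_right.mono (union_subset_union hS₁ hS₂) (filter_subset _ _)
  have hdisj' : Disjoint S₁ S₂ := hGH.mono hS₁ hS₂
  have hmem : ∀ i, (i ∈ S₁ → i ∈ G) ∧ (i ∈ S₂ → i ∈ H) ∧ (i ∈ N → i ∉ G ∧ i ∉ H) ∧
      (i ∈ G → i ∉ H) := fun i ↦
    ⟨@hS₁ i, @hS₂ i, fun hi ↦ by simpa using (mem_filter.1 hi).1, fun hi ↦ disjoint_left.1 hGH hi⟩
  have habs : ∑ i ∈ (G ∪ H)ᶜ, |h i| = ∑ i ∈ (G ∪ H)ᶜ, h i - 2 * ∑ i ∈ N, h i := by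
    rw [hN, sum_filter, mul_sum, ← sum_sub_distrib]
    refine sum_congr rfl fun i _ ↦ ?_
    split_ifs with hi
    · rw [abs_of_neg hi]; ring
    · rw [abs_of_nonneg (not_lt.1 hi)]; ring
  refine ⟨S₁ ∪ S₂ ∪ N, ?_, ?_, ?_⟩
  · ext i; simp only [mem_inter, mem_union]; grind
  · ext i; simp only [mem_inter, mem_union]; grind
  · rw [signedSum, sum_union hdisj, sum_union hdisj', habs,
      sum_eq_sum_add_sum_add_sum_compl_union hGH]
    ring

end SignedSum

section TwoLevel

variable {ι : Type*}

/-- The weights take the positive value `a` on `G`, the positive value `b` on `H` and vanish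
elsewhere. Either set may be empty, so a single positive value is allowed. -/
structure IsTwoLevel (w : ι → ℝ) (G H : Finset ι) (a b : ℝ) : Prop where
  disjoint : Disjoint G H
  left_pos : 0 < a
  right_pos : 0 < b
  eq_left : ∀ i ∈ G, w i = a
  eq_right : ∀ i ∈ H, w i = b
  eq_zero : ∀ i ∉ G, i ∉ H → w i = 0

variable {w h : ι → ℝ} {G H S : Finset ι} {a b : ℝ}

lemma exists_isTwoLevel [Finite ι] (hw : ∀ i, 0 ≤ w i) (hab : ∀ i, 0 < w i → w i = a ∨ w i = b) :
    ∃ G H a' b', IsTwoLevel w G H a' b' := by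
  classical
  cases nonempty_fintype ι
  have hpos : ∀ c : ℝ, ∃ c', 0 < c' ∧ ∀ i, 0 < w i → w i = c → w i = c' := fun c ↦
    (le_or_gt c 0).elim (fun hc ↦ ⟨1, one_pos, fun i hi hic ↦ by linarith⟩)
      fun hc ↦ ⟨c, hc, fun _ _ ↦ id⟩
  obtain ⟨a', ha', ha⟩ := hpos a
  obtain ⟨b', hb', hb⟩ := hpos b
  refine ⟨({i | w i = a'} : Finset ι), ({i | w i = b' ∧ w i ≠ a'} : Finset ι), a', b', ?_,
    ha', hb', ?_, ?_, ?_⟩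
  · exact disjoint_left.2 fun i hi hi' ↦ (mem_filter.1 hi').2.2 (mem_filter.1 hi).2
  · exact fun i hi ↦ (mem_filter.1 hi).2
  · exact fun i hi ↦ (mem_filter.1 hi).2.1
  · simp only [mem_filter_univ, not_and, not_not]
    intro i hia hib
    by_contra hi
    have hi_pos := (hw i).lt_of_ne' hi
    rcases hab i hi_pos with h | h
    · exact hia (ha i hi_pos h)
    · exact hia (hib (hb i hi_pos h))

lemma IsTwoLevel.symm (hw : IsTwoLevel w G H a b) : IsTwoLevel w H G b a :=
  ⟨hw.disjoint.symm, hw.right_pos, hw.left_pos, hw.eq_right, hw.eq_left,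
    fun i hi hi' ↦ hw.eq_zero i hi' hi⟩

lemma IsTwoLevel.nonneg (hw : IsTwoLevel w G H a b) (i : ι) : 0 ≤ w i := by
  by_cases hiG : i ∈ G
  · exact hw.eq_left i hiG ▸ hw.left_pos.le
  by_cases hiH : i ∈ H
  · exact hw.eq_right i hiH ▸ hw.right_pos.le
  · exact (hw.eq_zero i hiG hiH).ge

variable [DecidableEq ι]

/-- The number of elements of `G` inside `S` minus the number of those outside `S`. -/
def surplus (G S : Finset ι) : ℤ := 2 * #(S ∩ G) - #G

lemma signedSum_indicator [Fintype ι] (G S : Finset ι) :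
    signedSum (fun i ↦ if i ∈ G then 1 else 0) S = surplus G S := by
  simp [signedSum, surplus]

lemma pos_card_inter_of_surplus_pos (hS : 0 < surplus G S) : 0 < #(S ∩ G) := by
  unfold surplus at hS; omega

namespace IsTwoLevel

lemma eq_ite (hw : IsTwoLevel w G H a b) (i : ι) :
    w i = a * (if i ∈ G then 1 else 0) + b * (if i ∈ H then 1 else 0) := by
  by_cases hiG : i ∈ G
  · simp [hiG, disjoint_left.1 hw.disjoint hiG, hw.eq_left i hiG]
  by_cases hiH : i ∈ H
  · simp [hiG, hiH, hw.eq_right i hiH]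
  · simp [hiG, hiH, hw.eq_zero i hiG hiH]

variable [Fintype ι]

lemma signedSum_eq (hw : IsTwoLevel w G H a b) (S : Finset ι) :
    signedSum w S = surplus G S * a + surplus H S * b := by
  rw [funext hw.eq_ite, signedSum_add, signedSum_const_mul, signedSum_const_mul,
    signedSum_indicator, signedSum_indicator]
  ring

lemma exists_tight_surplus_pos (hw : IsTwoLevel w G H a b) (hmin : IsMinimalWeighting w)
    (hG : G.Nonempty) : ∃ S, signedSum w S = 1 ∧ 0 < surplus G S := by
  by_contra! hnonpos
  have hsum : 0 ≤ ∑ i, -1 * (if i ∈ G then (1 : ℝ) else 0) := by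
    refine hmin.sum_nonneg_of_tight hw.nonneg (fun i hi ↦ ?_) fun S hS ↦ ?_
    · have hiG : i ∉ G := fun hiG ↦ hw.left_pos.ne' (hw.eq_left i hiG ▸ hi)
      simp [hiG]
    · rw [signedSum_const_mul, signedSum_indicator]
      have : (surplus G S : ℝ) ≤ 0 := mod_cast hnonpos S hS
      linarith
  rw [← mul_sum, sum_boole, filter_univ_mem] at hsum
  have : (0 : ℝ) < #G := mod_cast hG.card_pos
  linarith

lemma one_le_left (hw : IsTwoLevel w G H a b) (hdec : IsDecisive w) (hS : signedSum w S = 1)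
    (hSG : 0 < surplus G S) : 1 ≤ a := by
  obtain ⟨i, hi⟩ := card_pos.1 (pos_card_inter_of_surplus_pos hSG)
  obtain ⟨hiS, hiG⟩ := mem_inter.1 hi
  have hia := hw.eq_left i hiG
  exact hia ▸ hdec.one_le_of_mem hS hiS (hia ▸ hw.left_pos)

lemma surplus_right_nonpos (hw : IsTwoLevel w G H a b) (hdec : IsDecisive w)
    (hS : signedSum w S = 1) (hSG : 0 < surplus G S) : surplus H S ≤ 0 := by
  have ha := hw.one_le_left hdec hS hSG
  have hSG' : (1 : ℝ) ≤ surplus G S := mod_cast hSG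
  rw [hw.signedSum_eq] at hS
  have : surplus H S * b ≤ 0 := by nlinarith
  exact_mod_cast nonpos_of_mul_nonpos_left this hw.right_pos

lemma exists_int_step (hw : IsTwoLevel w G H a b) (hdec : IsDecisive w)
    (hmin : IsMinimalWeighting w) (hG : G.Nonempty) (hH : H.Nonempty) :
    ∃ (S T : Finset ι) (u v : ℤ), signedSum w S = 1 ∧ signedSum w T = 1 ∧ 0 < u ∧ 0 < v ∧
      u ≤ #(S ∩ G) - #(T ∩ G) ∧ v ≤ #(T ∩ H) - #(S ∩ H) ∧ a = v ∧ b = u := by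
  obtain ⟨S, hS, hSG⟩ := hw.exists_tight_surplus_pos hmin hG
  obtain ⟨T, hT, hTH⟩ := hw.symm.exists_tight_surplus_pos hmin hH
  have hSH := hw.surplus_right_nonpos hdec hS hSG
  have hTG := hw.symm.surplus_right_nonpos hdec hT hTH
  have hbox : ∀ x ∈ Set.Icc (0 : ℤ) #G, ∀ y ∈ Set.Icc (0 : ℤ) #H,
      1 ≤ |(2 * x - (#G : ℤ)) * a + (2 * y - (#H : ℤ)) * b| := by
    rintro x ⟨hx₀, hx⟩ y ⟨hy₀, hy⟩
    lift x to ℕ using hx₀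
    lift y to ℕ using hy₀
    obtain ⟨R, rfl, rfl⟩ := exists_card_inter_eq hw.disjoint (mod_cast hx) (mod_cast hy)
    simpa [hw.signedSum_eq, surplus] using hdec R
  have hS' := hS
  have hT' := hT
  rw [hw.signedSum_eq] at hS' hT'
  have hcardG : #(S ∩ G) ≤ #G := card_le_card inter_subset_right
  have hcardH : #(T ∩ H) ≤ #H := card_le_card inter_subset_right
  simp only [surplus] at hSG hSH hTG hTH hS' hT'
  obtain ⟨u, v, hu, hv, hux, hvy, ha, hb⟩ := exists_int_coeffs_of_opposed_tight hw.right_pos hbox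
    (x₁ := #(S ∩ G)) (y₁ := #(S ∩ H)) (x₂ := #(T ∩ G)) (y₂ := #(T ∩ H))
    (by omega) (by omega) (by omega) (by omega) (by omega) (by omega)
    (by simpa using hS') (by simpa using hT')
  exact ⟨S, T, u, v, hS, hT, hu, hv, hux, hvy, ha, hb⟩

lemma left_eq_one_of_right_eq_empty (hw : IsTwoLevel w G ∅ a b) (hdec : IsDecisive w)
    (hS : signedSum w S = 1) (hSG : 0 < surplus G S) : a = 1 ∧ surplus G S = 1 := by
  have ha := hw.one_le_left hdec hS hSG
  have hSG' : (1 : ℝ) ≤ surplus G S := mod_cast hSG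
  have hprod : surplus G S * a = 1 := by
    simpa [hw.signedSum_eq, surplus] using hS
  have ha' : a = 1 := by nlinarith
  exact ⟨ha', by simpa [ha'] using hprod⟩

lemma card_left_eq_one_or_exists_tight (hw : IsTwoLevel w G H a b) (hdec : IsDecisive w)
    (hmin : IsMinimalWeighting w) (hG : G.Nonempty) :
    #G = 1 ∨ ∃ S, signedSum w S = 1 ∧ 0 < #(S ∩ G) ∧ #(S ∩ G) < #G := by
  obtain rfl | hH := H.eq_empty_or_nonempty
  · obtain ⟨S, hS, hSG⟩ := hw.exists_tight_surplus_pos hmin hG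
    have hcard : #(S ∩ G) ≤ #G := card_le_card inter_subset_right
    have hSG_one := (hw.left_eq_one_of_right_eq_empty hdec hS hSG).2
    unfold surplus at hSG_one
    exact or_iff_not_imp_left.2 fun hG_one ↦ ⟨S, hS, by omega, by omega⟩
  obtain ⟨S, T, u, v, hS, hT, hu, hv, hux, hvy, rfl, rfl⟩ := hw.exists_int_step hdec hmin hG hH
  have hcardG : #(S ∩ G) ≤ #G := card_le_card inter_subset_right
  have hcardH : #(T ∩ H) ≤ #H := card_le_card inter_subset_right
  have hS' : surplus G S * v + surplus H S * u = 1 := by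
    rw [hw.signedSum_eq] at hS; exact_mod_cast hS
  rcases eq_one_or_mem_Ioo_of_int_tight hu (by omega) (mod_cast hcardG) hS' with
    hG_one | hS_interior | hshift_interior
  · exact .inl (mod_cast hG_one)
  · exact .inr ⟨S, hS, mod_cast hS_interior.1, mod_cast hS_interior.2⟩
  · obtain ⟨R, hRG, hRH⟩ := exists_card_inter_eq hw.disjoint
      (x := (#(S ∩ G) - u).toNat) (y := (#(S ∩ H) + v).toNat) (by omega) (by omega)
    obtain ⟨hlower, hupper⟩ := hshift_interior
    have hRG' : (#(R ∩ G) : ℤ) = #(S ∩ G) - u := by omega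
    have hRH' : (#(R ∩ H) : ℤ) = #(S ∩ H) + v := by omega
    have hR : surplus G R * v + surplus H R * u = 1 := by
      rw [← hS', surplus, surplus, surplus, surplus, hRG', hRH']; ring
    exact .inr ⟨R, by rw [hw.signedSum_eq]; exact_mod_cast hR, by omega, by omega⟩

lemma sum_abs_compl_le_of_card_eq (hw : IsTwoLevel w G H a b)
    (hh : ∀ S, signedSum w S = 1 → 0 ≤ signedSum h S) (hS : signedSum w S = 1)
    {S₁ S₂ : Finset ι} (hS₁ : S₁ ⊆ G) (hS₂ : S₂ ⊆ H) (hcard₁ : #S₁ = #(S ∩ G))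
    (hcard₂ : #S₂ = #(S ∩ H)) :
    ∑ i ∈ (G ∪ H)ᶜ, |h i| ≤
      (2 * ∑ i ∈ S₁, h i - ∑ i ∈ G, h i) + (2 * ∑ i ∈ S₂, h i - ∑ i ∈ H, h i) := by
  obtain ⟨T, rfl, rfl, hT⟩ := exists_signedSum_eq_of_subset hw.disjoint h hS₁ hS₂
  have hT_tight : signedSum w T = 1 := by
    rw [← hS, hw.signedSum_eq, hw.signedSum_eq, surplus, surplus, surplus, surplus, hcard₁, hcard₂]
  linarith [hh T hT_tight]

lemma sum_abs_compl_le_expect (hw : IsTwoLevel w G H a b)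
    (hh : ∀ S, signedSum w S = 1 → 0 ≤ signedSum h S) (hS : signedSum w S = 1) :
    ∑ i ∈ (G ∪ H)ᶜ, |h i| ≤ surplus G S * 𝔼 i ∈ G, h i + surplus H S * 𝔼 i ∈ H, h i := by
  obtain ⟨S₁, hS₁, hcard₁, hle₁⟩ :=
    exists_subset_card_eq_sum_le_expect G h (card_le_card (inter_subset_right (s₁ := S)))
  obtain ⟨S₂, hS₂, hcard₂, hle₂⟩ :=
    exists_subset_card_eq_sum_le_expect H h (card_le_card (inter_subset_right (s₁ := S)))
  have hle := hw.sum_abs_compl_le_of_card_eq hh hS hS₁ hS₂ hcard₁ hcard₂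
  rw [← card_mul_expect G h, ← card_mul_expect H h] at hle
  simp only [surplus]
  push_cast
  linarith

end IsTwoLevel

end TwoLevel

namespace IsTwoLevel

variable {ι : Type*} [Fintype ι] {w w' h : ι → ℝ} {G H : Finset ι} {a b : ℝ}

lemma exists_nat_eq_left (hw : IsTwoLevel w G H a b) (hdec : IsDecisive w)
    (hmin : IsMinimalWeighting w) (hG : G.Nonempty) : ∃ m : ℕ, a = m := by
  classical
  obtain rfl | hH := H.eq_empty_or_nonempty
  · obtain ⟨S, hS, hSG⟩ := hw.exists_tight_surplus_pos hmin hG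
    exact ⟨1, by simpa using (hw.left_eq_one_of_right_eq_empty hdec hS hSG).1⟩
  · obtain ⟨-, -, -, v, -, -, -, hv, -, -, ha, -⟩ := hw.exists_int_step hdec hmin hG hH
    lift v to ℕ using hv.le
    exact ⟨v, mod_cast ha⟩

theorem exists_nat_eq (hw : IsTwoLevel w G H a b) (hdec : IsDecisive w)
    (hmin : IsMinimalWeighting w) (i : ι) : ∃ m : ℕ, w i = m := by
  classical
  by_cases hiG : i ∈ G
  · rw [hw.eq_left i hiG]; exact hw.exists_nat_eq_left hdec hmin ⟨i, hiG⟩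
  by_cases hiH : i ∈ H
  · rw [hw.eq_right i hiH]; exact hw.symm.exists_nat_eq_left hdec hmin ⟨i, hiH⟩
  · exact ⟨0, by simpa using hw.eq_zero i hiG hiH⟩

lemma expect_left_nonneg (hw : IsTwoLevel w G H a b) (hdec : IsDecisive w)
    (hmin : IsMinimalWeighting w) (hh : ∀ S, signedSum w S = 1 → 0 ≤ signedSum h S) :
    0 ≤ 𝔼 i ∈ G, h i := by
  classical
  have hcone : ∀ S, signedSum w S = 1 →
      0 ≤ surplus G S * 𝔼 i ∈ G, h i + surplus H S * 𝔼 i ∈ H, h i := fun S hS ↦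
    (sum_nonneg fun i _ ↦ abs_nonneg (h i)).trans (hw.sum_abs_compl_le_expect hh hS)
  obtain rfl | hG := G.eq_empty_or_nonempty
  · simp
  obtain ⟨S, hS, hSG⟩ := hw.exists_tight_surplus_pos hmin hG
  have hSG' : (0 : ℝ) < surplus G S := mod_cast hSG
  obtain rfl | hH := H.eq_empty_or_nonempty
  · exact nonneg_of_mul_nonneg_right (by simpa using hcone S hS) hSG'
  obtain ⟨T, hT, hTH⟩ := hw.symm.exists_tight_surplus_pos hmin hH
  have hTH' : (0 : ℝ) < surplus H T := mod_cast hTH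
  have hSH' : (surplus H S : ℝ) ≤ 0 := mod_cast hw.surplus_right_nonpos hdec hS hSG
  have hdet : 0 < (surplus G S * surplus H T - surplus G T * surplus H S : ℝ) := by
    refine pos_of_mul_pos_left ?_ hw.left_pos.le
    calc (0 : ℝ) < surplus H T - surplus H S := by linarith
      _ = (surplus G S * surplus H T - surplus G T * surplus H S) * a := by
        rw [hw.signedSum_eq] at hS hT
        linear_combination surplus H S * hT - surplus H T * hS
  refine nonneg_of_mul_nonneg_right ?_ hdet
  linarith [mul_nonneg hTH'.le (hcone S hS), mul_nonneg (neg_nonneg.2 hSH') (hcone T hT)]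

lemma eq_zero_left_of_expect_eq_zero (hw : IsTwoLevel w G H a b) (hdec : IsDecisive w)
    (hmin : IsMinimalWeighting w) (hh : ∀ S, signedSum w S = 1 → 0 ≤ signedSum h S)
    (hG : 𝔼 i ∈ G, h i = 0) (hH : 𝔼 i ∈ H, h i = 0) : ∀ i ∈ G, h i = 0 := by
  classical
  intro i hi
  suffices hconst : ∀ j ∈ G, h j = h i by
    rw [← hG, expect_congr rfl hconst, expect_const ⟨i, hi⟩]
  intro j hj
  rcases hw.card_left_eq_one_or_exists_tight hdec hmin ⟨i, hi⟩ with hG_one | ⟨S, hS, hlower, hupper⟩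
  · rw [card_le_one.1 hG_one.le i hi j hj]
  by_contra hij
  obtain ⟨S₁, hS₁, hcard₁, hlt₁⟩ := exists_subset_card_eq_sum_lt_expect hlower hupper hj hi hij
  obtain ⟨S₂, hS₂, hcard₂, hle₂⟩ :=
    exists_subset_card_eq_sum_le_expect H h (card_le_card (inter_subset_right (s₁ := S)))
  have hle := hw.sum_abs_compl_le_of_card_eq hh hS hS₁ hS₂ hcard₁ hcard₂
  rw [← card_mul_expect G h, ← card_mul_expect H h] at hle
  rw [hG, mul_zero] at hle hlt₁
  rw [hH, mul_zero] at hle hle₂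
  linarith [sum_nonneg fun i (_ : i ∈ (G ∪ H)ᶜ) ↦ abs_nonneg (h i)]

lemma eq_zero_of_sum_nonpos [DecidableEq ι] (hw : IsTwoLevel w G H a b) (hdec : IsDecisive w)
    (hmin : IsMinimalWeighting w) (hh : ∀ S, signedSum w S = 1 → 0 ≤ signedSum h S)
    (hsum : ∑ i ∈ G, h i + ∑ i ∈ H, h i + ∑ i ∈ (G ∪ H)ᶜ, |h i| ≤ 0) (i : ι) : h i = 0 := by
  have hG := hw.expect_left_nonneg hdec hmin hh
  have hH := hw.symm.expect_left_nonneg hdec hmin hh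
  have hZ : ∀ j ∈ (G ∪ H)ᶜ, 0 ≤ |h j| := fun j _ ↦ abs_nonneg (h j)
  have hG_sum : 0 ≤ ∑ i ∈ G, h i := card_mul_expect G h ▸ mul_nonneg (Nat.cast_nonneg _) hG
  have hH_sum : 0 ≤ ∑ i ∈ H, h i := card_mul_expect H h ▸ mul_nonneg (Nat.cast_nonneg _) hH
  have hZ_sum := sum_nonneg hZ
  have hG_expect : 𝔼 i ∈ G, h i = 0 := by
    rw [expect_eq_sum_div_card, le_antisymm (by linarith) hG_sum, zero_div]
  have hH_expect : 𝔼 i ∈ H, h i = 0 := by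
    rw [expect_eq_sum_div_card, le_antisymm (by linarith) hH_sum, zero_div]
  by_cases hiG : i ∈ G
  · exact hw.eq_zero_left_of_expect_eq_zero hdec hmin hh hG_expect hH_expect i hiG
  by_cases hiH : i ∈ H
  · exact hw.symm.eq_zero_left_of_expect_eq_zero hdec hmin hh hH_expect hG_expect i hiH
  · exact abs_eq_zero.1 ((sum_eq_zero_iff_of_nonneg hZ).1 (le_antisymm (by linarith) hZ_sum) i
      (by simp [hiG, hiH]))

lemma sum_sub_le_sum_abs_sub [DecidableEq ι] (hw : IsTwoLevel w G H a b) (w' : ι → ℝ) :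
    ∑ i ∈ G, (w' i - w i) + ∑ i ∈ H, (w' i - w i) + ∑ i ∈ (G ∪ H)ᶜ, |w' i - w i| ≤
      ∑ i, |w' i| - ∑ i, |w i| := by
  rw [← sum_sub_distrib, sum_eq_sum_add_sum_add_sum_compl_union hw.disjoint fun i ↦ |w' i| - |w i|]
  have hle : ∀ i, w' i - w i ≤ |w' i| - |w i| := fun i ↦ by
    rw [abs_of_nonneg (hw.nonneg i)]; exact sub_le_sub_right (le_abs_self _) _
  refine add_le_add (add_le_add (sum_le_sum fun i _ ↦ hle i) (sum_le_sum fun i _ ↦ hle i))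
    (sum_le_sum fun i hi ↦ ?_)
  obtain ⟨hiG, hiH⟩ : i ∉ G ∧ i ∉ H := by simpa using hi
  simp [hw.eq_zero i hiG hiH]

theorem eq_of_preservesWinning (hw : IsTwoLevel w G H a b) (hdec : IsDecisive w)
    (hmin : IsMinimalWeighting w) (hw' : PreservesWinning w w')
    (hle : ∑ i, |w' i| ≤ ∑ i, |w i|) : w' = w := by
  classical
  have hh : ∀ S, signedSum w S = 1 → 0 ≤ signedSum (fun i ↦ w' i - w i) S := fun S hS ↦ by
    rw [signedSum_sub, hS]; linarith [hw' S hS.ge]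
  have hsum := hw.sum_sub_le_sum_abs_sub w'
  exact funext fun i ↦ sub_eq_zero.1 (hw.eq_zero_of_sum_nonpos hdec hmin hh (by linarith) i)

lemma exists_tight (hw : IsTwoLevel w G H a b) (hdec : IsDecisive w)
    (hmin : IsMinimalWeighting w) : ∃ S, signedSum w S = 1 := by
  classical
  obtain rfl | hG := G.eq_empty_or_nonempty
  · obtain rfl | hH := H.eq_empty_or_nonempty
    · have := hdec ∅
      norm_num [hw.signedSum_eq, surplus] at this
    · exact (hw.symm.exists_tight_surplus_pos hmin hH).imp fun _ ↦ And.left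
  · exact (hw.exists_tight_surplus_pos hmin hG).imp fun _ ↦ And.left

end IsTwoLevel

section Duality

lemma exists_mem_le_or_exists_separating {κ : Type*} [Fintype κ] {s : Set (κ → ℝ)}
    (hs : Convex ℝ s) (hs' : IsCompact s) (c : κ → ℝ) :
    (∃ y ∈ s, y ≤ c) ∨ ∃ l : κ → ℝ, 0 ≤ l ∧ ∃ t, ∑ p, l p * c p < t ∧
      ∀ y ∈ s, t ≤ ∑ p, l p * y p := by
  classical
  refine or_iff_not_imp_left.2 fun hno ↦ ?_
  push Not at hno
  obtain ⟨f, u, v, hu, huv, hv⟩ := geometric_hahn_banach_compact_closed hs hs' (convex_Iic c)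
    isClosed_Iic (Set.disjoint_left.2 hno)
  have hf : ∀ y, f y = -∑ p, -f (Pi.single p 1) * y p := fun y ↦ by
    conv_lhs => rw [pi_eq_sum_univ' y]
    simp only [map_sum, map_smul, smul_eq_mul, mul_neg, sum_neg_distrib, neg_neg, mul_comm]
  have hc := hv c Set.self_mem_Iic
  refine ⟨fun p ↦ -f (Pi.single p 1), fun p ↦ neg_nonneg.2 ?_, -u, ?_, fun y hy ↦ ?_⟩
  · by_contra! hpos
    have hstep : 0 ≤ (f c - v) / f (Pi.single p 1) := div_nonneg (sub_nonneg.2 hc.le) hpos.le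
    have hray := hv (c - ((f c - v) / f (Pi.single p 1)) • Pi.single p 1)
      (Set.mem_Iic.2 (sub_le_self _ (smul_nonneg hstep (Pi.single_nonneg.2 zero_le_one))))
    rw [map_sub, map_smul, smul_eq_mul, div_mul_cancel₀ _ hpos.ne'] at hray
    linarith
  · linarith [hf c]
  · linarith [hf y, hu y hy]

variable {d n : ℕ} {A : (Fin d → Fin n) → Bool} {k : (Fin d → Fin n) → ℝ} {Λ : Fin d → Fin n → ℝ}
  {W : ℝ}

lemma sum_mul_sum_eq_sum_mul_hypSum (k : (Fin d → Fin n) → ℝ) (g : Fin d → Fin n → ℝ) :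
    ∑ α, k α * ∑ i, g i (α i) = ∑ i, ∑ j, g i j * hypSum k i j := by
  simp only [mul_sum]
  rw [sum_comm]
  refine sum_congr rfl fun i _ ↦ ?_
  rw [← sum_fiberwise univ (fun α : Fin d → Fin n ↦ α i)]
  refine sum_congr rfl fun j _ ↦ ?_
  rw [hypSum, mul_sum]
  refine sum_congr rfl fun α hα ↦ ?_
  rw [(mem_filter.1 hα).2, mul_comm]

lemma sum_hypSum (k : (Fin d → Fin n) → ℝ) (i : Fin d) : ∑ j, hypSum k i j = ∑ α, k α :=
  sum_fiberwise univ (fun α : Fin d → Fin n ↦ α i) k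

lemma hypSum_const_mul (c : ℝ) (k : (Fin d → Fin n) → ℝ) (i : Fin d) (j : Fin n) :
    hypSum (fun α ↦ c * k α) i j = c * hypSum k i j := by
  simp only [hypSum, mul_sum]

lemma hypSum_single (α : Fin d → Fin n) (i : Fin d) (j : Fin n) :
    hypSum (Pi.single α 1) i j = if α i = j then 1 else 0 := by
  simp [hypSum, sum_pi_single']

lemma IsPolyplex.le_coverWeight (hk : IsPolyplex A k W) (hΛ : IsCover A Λ) :
    W ≤ coverWeight Λ := by
  obtain ⟨hk_nonneg, hk_supp, hk_le, rfl⟩ := hk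
  calc ∑ α, k α ≤ ∑ α, k α * ∑ i, Λ i (α i) := sum_le_sum fun α _ ↦ by
        cases hα : A α with
        | false => simp [hk_supp α hα]
        | true => exact le_mul_of_one_le_right (hk_nonneg α) (hΛ.2 α hα)
    _ = ∑ i, ∑ j, Λ i j * hypSum k i j := sum_mul_sum_eq_sum_mul_hypSum k Λ
    _ ≤ coverWeight Λ := sum_le_sum fun i _ ↦ sum_le_sum fun j _ ↦
        mul_le_of_le_one_right (hΛ.1 i j) (hk_le i j)

/-- The family of all hyperplane sums, as a linear map. -/
def hypSumLinearMap (d n : ℕ) : ((Fin d → Fin n) → ℝ) →ₗ[ℝ] (Fin d × Fin n → ℝ) where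
  toFun k p := hypSum k p.1 p.2
  map_add' k l := by ext p; simp [hypSum, sum_add_distrib]
  map_smul' c k := by ext p; simp [hypSum, mul_sum]

/-- The probability distributions carried by the support of `A`. -/
def supportSimplex (A : (Fin d → Fin n) → Bool) : Set ((Fin d → Fin n) → ℝ) :=
  stdSimplex ℝ (Fin d → Fin n) ∩ {k | ∀ α, A α = false → k α = 0}

lemma isCompact_supportSimplex (A : (Fin d → Fin n) → Bool) : IsCompact (supportSimplex A) := by
  refine (isCompact_stdSimplex ℝ _).inter_right ?_
  simp only [Set.ofPred_forall]
  exact isClosed_iInter fun α ↦ isClosed_iInter fun _ ↦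
    isClosed_eq (continuous_apply α) continuous_const

lemma convex_supportSimplex (A : (Fin d → Fin n) → Bool) : Convex ℝ (supportSimplex A) := by
  refine (convex_stdSimplex ℝ _).inter fun x hx y hy s t _ _ _ α hα ↦ ?_
  simp [hx α hα, hy α hα]

lemma single_mem_supportSimplex {α : Fin d → Fin n} (hα : A α = true) :
    Pi.single α 1 ∈ supportSimplex A := by
  refine ⟨single_mem_stdSimplex ℝ α, fun β hβ ↦ Pi.single_eq_of_ne ?_ _⟩
  rintro rfl
  simp [hα] at hβ

lemma isPolyplex_const_mul (hW : 0 < W) (hk : k ∈ supportSimplex A)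
    (hle : ∀ i j, hypSum k i j ≤ W⁻¹) : IsPolyplex A (fun α ↦ W * k α) W := by
  refine ⟨fun α ↦ mul_nonneg hW.le (hk.1.1 α), fun α hα ↦ ?_, fun i j ↦ ?_, ?_⟩
  · simp only [hk.2 α hα, mul_zero]
  · rw [hypSum_const_mul, ← le_inv_mul_iff₀ hW, mul_one]
    exact hle i j
  · rw [← mul_sum, hk.1.2, mul_one]

theorem exists_isCover_coverWeight_lt (hW : 0 < W) (hno : ¬ ∃ k, IsPolyplex A k W) :
    ∃ Λ, IsCover A Λ ∧ coverWeight Λ < W := by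
  have hconvex := (convex_supportSimplex A).linear_image (hypSumLinearMap d n)
  have hcompact := (isCompact_supportSimplex A).image
    (LinearMap.continuous_of_finiteDimensional (hypSumLinearMap d n))
  obtain ⟨_, ⟨k, hk, rfl⟩, hle⟩ | ⟨l, hl, t, hlt, hle⟩ :=
    exists_mem_le_or_exists_separating hconvex hcompact fun _ ↦ W⁻¹
  · exact absurd ⟨_, isPolyplex_const_mul hW hk fun i j ↦ hle (i, j)⟩ hno
  rw [← sum_mul] at hlt
  have ht : 0 < t :=
    (mul_nonneg (sum_nonneg fun p _ ↦ hl p) (inv_nonneg.2 hW.le)).trans_lt hlt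
  refine ⟨fun i j ↦ l (i, j) / t, ⟨fun i j ↦ div_nonneg (hl _) ht.le, fun α hα ↦ ?_⟩, ?_⟩
  · rw [← sum_div, one_le_div ht]
    calc t ≤ ∑ p, l p * hypSumLinearMap d n (Pi.single α 1) p :=
          hle _ ⟨_, single_mem_supportSimplex hα, rfl⟩
      _ = ∑ i, l (i, α i) := by simp [Fintype.sum_prod_type, hypSumLinearMap, hypSum_single]
  · simp only [coverWeight, ← sum_div]
    rwa [div_lt_iff₀ ht, ← Fintype.sum_prod_type, ← div_lt_iff₀' hW, div_eq_mul_inv]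

lemma IsPolyplex.isPolydiagonal (hk : IsPolyplex A k n) : IsPolydiagonal A k := by
  obtain ⟨hk_nonneg, hk_supp, hk_le, hk_sum⟩ := hk
  refine ⟨hk_nonneg, hk_supp, fun i j ↦ ?_⟩
  have hsum : ∑ j, hypSum k i j = ∑ _j : Fin n, (1 : ℝ) := by
    rw [sum_hypSum, hk_sum]; simp
  exact (sum_eq_sum_iff_of_le fun j _ ↦ hk_le i j).1 hsum j (mem_univ j)

lemma IsOptimalCover.coverWeight_lt (hΛ : IsOptimalCover A Λ) (hA : ¬ HasPolydiagonal A) :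
    coverWeight Λ < n := by
  have hn : (0 : ℝ) < n := by
    refine Nat.cast_pos.2 (Nat.pos_of_ne_zero ?_)
    rintro rfl
    exact hA ⟨0, fun _ ↦ le_rfl, fun _ _ ↦ rfl, fun _ j ↦ j.elim0⟩
  obtain ⟨Λ', hΛ', hlt⟩ :=
    exists_isCover_coverWeight_lt hn fun ⟨k, hk⟩ ↦ hA ⟨k, hk.isPolydiagonal⟩
  exact (hΛ.2 Λ' hΛ').trans_lt hlt

lemma IsOptimalCover.coverWeight_eq (hΛ : IsOptimalCover A Λ)
    (hW : IsGreatest {W' | ∃ k, IsPolyplex A k W'} W) : coverWeight Λ = W := by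
  obtain ⟨⟨k, hk⟩, hW_max⟩ := hW
  have hW_nonneg : 0 ≤ W := hk.2.2.2 ▸ sum_nonneg fun α _ ↦ hk.1 α
  refine le_antisymm (le_of_forall_gt fun W' hW' ↦ ?_) (hk.le_coverWeight hΛ.1)
  obtain ⟨Λ', hΛ', hlt⟩ :=
    exists_isCover_coverWeight_lt (hW_nonneg.trans_lt hW') fun hW'_mem ↦ hW'.not_ge (hW_max hW'_mem)
  exact (hΛ.2 Λ' hΛ').trans_lt hlt

end Duality

section OrderTwo

variable {d : ℕ} {A : (Fin d → Fin 2) → Bool} {Λ Λ' : Fin d → Fin 2 → ℝ} {c : Fin d → Fin 2}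
  {w : Fin d → ℝ}

/-- The coordinates in which the index `α` agrees with the reference index `c`. For fixed `c` this
identifies the indices of order 2 with the subsets of `Fin d`. -/
def agreeSet (c α : Fin d → Fin 2) : Finset (Fin d) := {i | α i = c i}

/-- The excess of `Λ` on the hyperplane through `c` over the parallel hyperplane, per direction. -/
def imbalance (c : Fin d → Fin 2) (Λ : Fin d → Fin 2 → ℝ) (i : Fin d) : ℝ :=
  Λ i (c i) - Λ i (c i).rev

/-- The imbalances of `Λ` in units of `2 - coverWeight Λ`, which is the deficiency when `Λ` is
optimal. -/
noncomputable def normalizedImbalance (c : Fin d → Fin 2) (Λ : Fin d → Fin 2 → ℝ) (i : Fin d) : ℝ :=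
  (2 - coverWeight Λ)⁻¹ * imbalance c Λ i

/-- The cheapest nonnegative table with imbalances `x`. -/
def imbalanceCover (c : Fin d → Fin 2) (x : Fin d → ℝ) (i : Fin d) (j : Fin 2) : ℝ :=
  if j = c i then (x i)⁺ else (x i)⁻

/-- Every index in the support of `A` wins under the weights `w`. -/
def IsFeasible (A : (Fin d → Fin 2) → Bool) (c : Fin d → Fin 2) (w : Fin d → ℝ) : Prop :=
  ∀ α, A α = true → 1 ≤ signedSum w (agreeSet c α)

lemma sum_fin_two_eq_add_rev (f : Fin 2 → ℝ) (j : Fin 2) : ∑ l, f l = f j + f j.rev := by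
  fin_cases j <;> simp [Fin.sum_univ_two, add_comm]

lemma rev_ne_self_fin_two (j : Fin 2) : j.rev ≠ j := by
  fin_cases j <;> simp

lemma eq_or_eq_rev_fin_two (j l : Fin 2) : l = j ∨ l = j.rev := by
  fin_cases j <;> fin_cases l <;> simp

lemma exists_agreeSet_eq (c : Fin d → Fin 2) (S : Finset (Fin d)) : ∃ α, agreeSet c α = S := by
  refine ⟨fun i ↦ if i ∈ S then c i else (c i).rev, ?_⟩
  ext i
  by_cases hi : i ∈ S <;> simp [agreeSet, hi, rev_ne_self_fin_two]

lemma signedSum_agreeSet (w : Fin d → ℝ) (c α : Fin d → Fin 2) :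
    signedSum w (agreeSet c α) = ∑ i, if α i = c i then w i else -w i := by
  simp [signedSum_eq_sum_ite, agreeSet]

lemma sum_apply_eq (c : Fin d → Fin 2) (Λ : Fin d → Fin 2 → ℝ) (α : Fin d → Fin 2) :
    ∑ i, Λ i (α i) = (coverWeight Λ + signedSum (imbalance c Λ) (agreeSet c α)) / 2 := by
  rw [signedSum_agreeSet, coverWeight, ← sum_add_distrib, sum_div]
  refine sum_congr rfl fun i _ ↦ ?_
  rw [sum_fin_two_eq_add_rev _ (c i), imbalance]
  rcases eq_or_eq_rev_fin_two (c i) (α i) with hi | hi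
  · rw [if_pos hi, hi]; ring
  · rw [if_neg (hi ▸ rev_ne_self_fin_two _), hi]; ring

lemma imbalance_imbalanceCover (c : Fin d → Fin 2) (x : Fin d → ℝ) :
    imbalance c (imbalanceCover c x) = x := by
  ext i
  simp [imbalance, imbalanceCover, rev_ne_self_fin_two]

lemma coverWeight_imbalanceCover (c : Fin d → Fin 2) (x : Fin d → ℝ) :
    coverWeight (imbalanceCover c x) = ∑ i, |x i| := by
  refine sum_congr rfl fun i _ ↦ ?_
  rw [sum_fin_two_eq_add_rev _ (c i)]
  simp [imbalanceCover, rev_ne_self_fin_two, posPart_add_negPart]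

-- The scale `s = 2 / (∑ |w i| + 1)` solves `∑ |s * w i| + s = 2`, so that an index of signed sum
-- `1` is covered exactly once.
lemma isCover_imbalanceCover (hw : IsFeasible A c w) :
    IsCover A (imbalanceCover c fun i ↦ 2 / (∑ i, |w i| + 1) * w i) := by
  refine ⟨fun i j ↦ ?_, fun α hα ↦ ?_⟩
  · unfold imbalanceCover
    split_ifs
    exacts [posPart_nonneg _, negPart_nonneg _]
  · rw [sum_apply_eq c, imbalance_imbalanceCover, coverWeight_imbalanceCover, signedSum_const_mul]
    have hscale : 0 < 2 / (∑ i, |w i| + 1) := by positivity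
    simp only [abs_mul, abs_of_pos hscale, ← mul_sum]
    rw [← mul_add, one_le_div two_pos]
    calc (2 : ℝ) = 2 / (∑ i, |w i| + 1) * (∑ i, |w i| + 1) := by field_simp
      _ ≤ _ := by gcongr; exact hw α hα

lemma IsCover.isFeasible_normalizedImbalance (hΛ : IsCover A Λ) (hlt : coverWeight Λ < 2)
    (c : Fin d → Fin 2) : IsFeasible A c (normalizedImbalance c Λ) := by
  intro α hα
  have hcover := hΛ.2 α hα
  rw [sum_apply_eq c] at hcover
  unfold normalizedImbalance
  rw [signedSum_const_mul, ← div_eq_inv_mul, one_le_div (sub_pos.2 hlt)]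
  linarith

lemma imbalance_eq_mul_normalizedImbalance (hlt : coverWeight Λ < 2) (c : Fin d → Fin 2)
    (i : Fin d) : imbalance c Λ i = (2 - coverWeight Λ) * normalizedImbalance c Λ i := by
  rw [normalizedImbalance, mul_inv_cancel_left₀ (sub_pos.2 hlt).ne']

lemma sum_abs_imbalance (hlt : coverWeight Λ < 2) (c : Fin d → Fin 2) :
    ∑ i, |imbalance c Λ i| = (2 - coverWeight Λ) * ∑ i, |normalizedImbalance c Λ i| := by
  simp only [imbalance_eq_mul_normalizedImbalance hlt, abs_mul, abs_of_pos (sub_pos.2 hlt),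
    ← mul_sum]

namespace IsOptimalCover

lemma coverWeight_le_mul_sum_abs (hΛ : IsOptimalCover A Λ) (hw : IsFeasible A c w) :
    coverWeight Λ ≤ (2 - coverWeight Λ) * ∑ i, |w i| := by
  have hscale : 0 < 2 / (∑ i, |w i| + 1) := by positivity
  have hle := hΛ.2 _ (isCover_imbalanceCover hw)
  simp only [coverWeight_imbalanceCover, abs_mul, abs_of_pos hscale, ← mul_sum] at hle
  rw [div_mul_eq_mul_div, le_div_iff₀ (by positivity)] at hle
  linarith

lemma abs_imbalance_eq (hΛ : IsOptimalCover A Λ) (hlt : coverWeight Λ < 2) (c : Fin d → Fin 2)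
    (i : Fin d) : |imbalance c Λ i| = ∑ j, Λ i j := by
  have hle : ∀ i ∈ univ, |imbalance c Λ i| ≤ ∑ j, Λ i j := fun i _ ↦ by
    rw [sum_fin_two_eq_add_rev _ (c i), imbalance]
    exact abs_sub_le_iff.2 ⟨by linarith [hΛ.1.1 i (c i).rev], by linarith [hΛ.1.1 i (c i)]⟩
  refine (sum_eq_sum_iff_of_le hle).1 (le_antisymm (sum_le_sum hle) ?_) i (mem_univ i)
  rw [sum_abs_imbalance hlt]
  exact hΛ.coverWeight_le_mul_sum_abs (hΛ.1.isFeasible_normalizedImbalance hlt c)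

lemma mul_sum_abs_normalizedImbalance (hΛ : IsOptimalCover A Λ) (hlt : coverWeight Λ < 2)
    (c : Fin d → Fin 2) :
    (2 - coverWeight Λ) * ∑ i, |normalizedImbalance c Λ i| = coverWeight Λ := by
  rw [← sum_abs_imbalance hlt, coverWeight]
  exact sum_congr rfl fun i _ ↦ hΛ.abs_imbalance_eq hlt c i

lemma eq_imbalanceCover (hΛ : IsOptimalCover A Λ) (hlt : coverWeight Λ < 2) (c : Fin d → Fin 2) :
    Λ = imbalanceCover c (imbalance c Λ) := by
  ext i j
  have habs := hΛ.abs_imbalance_eq hlt c i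
  rw [sum_fin_two_eq_add_rev _ (c i)] at habs
  have hdiff : imbalance c Λ i = Λ i (c i) - Λ i (c i).rev := rfl
  have hsub := posPart_sub_negPart (imbalance c Λ i)
  have hadd := posPart_add_negPart (imbalance c Λ i)
  unfold imbalanceCover
  rcases eq_or_eq_rev_fin_two (c i) j with rfl | rfl
  · rw [if_pos rfl]; linarith
  · rw [if_neg (rev_ne_self_fin_two _)]; linarith

lemma sum_abs_normalizedImbalance_le (hΛ : IsOptimalCover A Λ) (hlt : coverWeight Λ < 2)
    (hw : IsFeasible A c w) : ∑ i, |normalizedImbalance c Λ i| ≤ ∑ i, |w i| := by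
  refine le_of_mul_le_mul_left ?_ (sub_pos.2 hlt)
  rw [hΛ.mul_sum_abs_normalizedImbalance hlt]
  exact hΛ.coverWeight_le_mul_sum_abs hw

lemma isMinimalWeighting_normalizedImbalance (hΛ : IsOptimalCover A Λ) (hlt : coverWeight Λ < 2)
    (c : Fin d → Fin 2) : IsMinimalWeighting (normalizedImbalance c Λ) := fun _ hw' ↦
  hΛ.sum_abs_normalizedImbalance_le hlt fun α hα ↦
    hw' _ (hΛ.1.isFeasible_normalizedImbalance hlt c α hα)

lemma exists_isTwoLevel_normalizedImbalance (hΛ : IsOptimalCover A Λ) (hlt : coverWeight Λ < 2)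
    (hc : ∀ i j, Λ i j ≤ Λ i (c i)) {u v : ℝ} (huv : ∀ i j, 0 < Λ i j → Λ i j = u ∨ Λ i j = v) :
    ∃ G H a b, IsTwoLevel (normalizedImbalance c Λ) G H a b := by
  have hdef := sub_pos.2 hlt
  have hnonneg : ∀ i, 0 ≤ imbalance c Λ i := fun i ↦ sub_nonneg.2 (hc i _)
  refine exists_isTwoLevel (a := (2 - coverWeight Λ)⁻¹ * u) (b := (2 - coverWeight Λ)⁻¹ * v)
    (fun i ↦ mul_nonneg (inv_nonneg.2 hdef.le) (hnonneg i)) fun i hi ↦ ?_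
  have hentry : Λ i (c i) = imbalance c Λ i := by
    conv_lhs => rw [hΛ.eq_imbalanceCover hlt c]
    simp [imbalanceCover, hnonneg i]
  have hi_pos : 0 < imbalance c Λ i := pos_of_mul_pos_right hi (inv_nonneg.2 hdef.le)
  exact (hentry ▸ huv i (c i) (hentry ▸ hi_pos)).imp
    (congrArg ((2 - coverWeight Λ)⁻¹ * ·)) (congrArg ((2 - coverWeight Λ)⁻¹ * ·))

end IsOptimalCover

lemma sum_mul_signedSum_agreeSet_eq_zero {B : (Fin d → Fin 2) → Bool} {k : (Fin d → Fin 2) → ℝ}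
    (hk : IsPolydiagonal B k) (w : Fin d → ℝ) (c : Fin d → Fin 2) :
    ∑ α, k α * signedSum w (agreeSet c α) = 0 := by
  simp only [signedSum_agreeSet]
  rw [sum_mul_sum_eq_sum_mul_hypSum k fun i j ↦ if j = c i then w i else -w i]
  refine sum_eq_zero fun i _ ↦ ?_
  simp [hk.2.2, sum_fin_two_eq_add_rev _ (c i), rev_ne_self_fin_two]

lemma pos_of_not_hasPolydiagonal {n : ℕ} {A : (Fin d → Fin n) → Bool} (hA : ¬ HasPolydiagonal A) :
    0 < d := by
  refine Nat.pos_of_ne_zero ?_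
  rintro rfl
  exact hA ⟨0, fun _ ↦ le_rfl, fun _ _ ↦ rfl, fun i ↦ i.elim0⟩

lemma IsFeasible.signedSum_le_neg_one (hw : IsFeasible A c w) (hA : IsExtremal A)
    {β : Fin d → Fin 2} (hβ : A β = false) : signedSum w (agreeSet c β) ≤ -1 := by
  obtain ⟨k, hk⟩ := hA.2 β hβ
  obtain ⟨i₀⟩ : Nonempty (Fin d) := ⟨⟨0, pos_of_not_hasPolydiagonal hA.1⟩⟩
  have hsum : ∑ α, k α * (signedSum w (agreeSet c α) - 1) = -2 := by
    have htotal : ∑ α, k α = 2 := by simp [← sum_hypSum k i₀, hk.2.2]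
    simp only [mul_sub, mul_one, sum_sub_distrib, sum_mul_signedSum_agreeSet_eq_zero hk, htotal,
      zero_sub]
  have hother : 0 ≤ ∑ α ∈ univ.erase β, k α * (signedSum w (agreeSet c α) - 1) := by
    refine sum_nonneg fun α hα ↦ ?_
    cases hAα : A α with
    | true => exact mul_nonneg (hk.1 α) (sub_nonneg.2 (hw α hAα))
    | false => simp [hk.2.1 α (by simp [addEntry, ne_of_mem_erase hα, hAα])]
  rw [← add_sum_erase _ _ (mem_univ β)] at hsum
  have hkβ : k β ≤ 1 := by
    rw [← hk.2.2 i₀ (β i₀)]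
    exact single_le_sum (fun α _ ↦ hk.1 α) (by simp)
  have hkβ_pos : 0 < k β := (hk.1 β).lt_of_ne' fun h ↦ by rw [h] at hsum; linarith
  have : 0 ≤ -1 - signedSum w (agreeSet c β) := nonneg_of_mul_nonneg_right (by linarith) hkβ_pos
  linarith

lemma IsFeasible.isDecisive (hw : IsFeasible A c w) (hA : IsExtremal A) : IsDecisive w := by
  intro S
  obtain ⟨α, rfl⟩ := exists_agreeSet_eq c S
  cases hα : A α with
  | true => exact le_abs.2 (.inl (hw α hα))
  | false => exact le_abs'.2 (.inl (hw.signedSum_le_neg_one hA hα))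

lemma IsFeasible.preservesWinning {w' : Fin d → ℝ} (hw : IsFeasible A c w) (hA : IsExtremal A)
    (hw' : IsFeasible A c w') : PreservesWinning w w' := by
  intro S hS
  obtain ⟨α, rfl⟩ := exists_agreeSet_eq c S
  refine hw' α (Bool.eq_true_of_not_eq_false fun hα ↦ ?_)
  linarith [hw.signedSum_le_neg_one hA hα]

namespace IsOptimalCover

variable {G H : Finset (Fin d)} {a b : ℝ}

theorem eq_of_isTwoLevel (hΛ : IsOptimalCover A Λ) (hA : IsExtremal A)
    (hw : IsTwoLevel (normalizedImbalance c Λ) G H a b) (hΛ' : IsOptimalCover A Λ') : Λ' = Λ := by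
  have hlt : coverWeight Λ < 2 := hΛ.coverWeight_lt hA.1
  have hlt' : coverWeight Λ' < 2 := hΛ'.coverWeight_lt hA.1
  have hweight : coverWeight Λ' = coverWeight Λ := le_antisymm (hΛ'.2 Λ hΛ.1) (hΛ.2 Λ' hΛ'.1)
  have hfeas := hΛ.1.isFeasible_normalizedImbalance hlt c
  have hfeas' := hΛ'.1.isFeasible_normalizedImbalance hlt' c
  have hnormalized := hw.eq_of_preservesWinning (hfeas.isDecisive hA)
    (hΛ.isMinimalWeighting_normalizedImbalance hlt c) (hfeas.preservesWinning hA hfeas')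
    (hΛ'.sum_abs_normalizedImbalance_le hlt' hfeas)
  have himbalance : imbalance c Λ' = imbalance c Λ := by
    ext i
    rw [imbalance_eq_mul_normalizedImbalance hlt', imbalance_eq_mul_normalizedImbalance hlt,
      hnormalized, hweight]
  rw [hΛ'.eq_imbalanceCover hlt' c, himbalance, ← hΛ.eq_imbalanceCover hlt c]

theorem exists_nat_deficiency_eq (hΛ : IsOptimalCover A Λ) (hA : IsExtremal A)
    (hw : IsTwoLevel (normalizedImbalance c Λ) G H a b) :
    ∃ q : ℕ, 0 < q ∧ 2 - coverWeight Λ = 1 / q := by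
  have hlt : coverWeight Λ < 2 := hΛ.coverWeight_lt hA.1
  have hdec := (hΛ.1.isFeasible_normalizedImbalance hlt c).isDecisive hA
  have hmin := hΛ.isMinimalWeighting_normalizedImbalance hlt c
  obtain ⟨S, hS⟩ := hw.exists_tight hdec hmin
  choose m hm using hw.exists_nat_eq hdec hmin
  have hq : (2 - coverWeight Λ) * ∑ i ∈ S, normalizedImbalance c Λ i = 1 := by
    have hweight := hΛ.mul_sum_abs_normalizedImbalance hlt c
    simp only [abs_of_nonneg (hw.nonneg _)] at hweight
    rw [signedSum] at hS
    linear_combination hweight / 2 + (2 - coverWeight Λ) / 2 * hS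
  rw [sum_congr rfl fun i _ ↦ hm i, ← Nat.cast_sum] at hq
  exact ⟨∑ i ∈ S, m i, Nat.pos_of_ne_zero fun hzero ↦ by simp [hzero] at hq,
    eq_one_div_of_mul_eq_one_left hq⟩

theorem exists_int_eq_mul_deficiency (hΛ : IsOptimalCover A Λ) (hA : IsExtremal A)
    (hw : IsTwoLevel (normalizedImbalance c Λ) G H a b) (i : Fin d) (j : Fin 2) :
    ∃ m : ℤ, Λ i j = m * (2 - coverWeight Λ) := by
  have hlt : coverWeight Λ < 2 := hΛ.coverWeight_lt hA.1
  have hdec := (hΛ.1.isFeasible_normalizedImbalance hlt c).isDecisive hA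
  obtain ⟨m, hm⟩ := hw.exists_nat_eq hdec (hΛ.isMinimalWeighting_normalizedImbalance hlt c) i
  have himbalance : imbalance c Λ i = m * (2 - coverWeight Λ) := by
    rw [imbalance_eq_mul_normalizedImbalance hlt, hm, mul_comm]
  have hnonneg : 0 ≤ imbalance c Λ i :=
    himbalance ▸ mul_nonneg (Nat.cast_nonneg m) (sub_pos.2 hlt).le
  have hentry := congrFun₂ (hΛ.eq_imbalanceCover hlt c) i j
  unfold imbalanceCover at hentry
  split_ifs at hentry
  · exact ⟨m, by rw [hentry, posPart_of_nonneg hnonneg, himbalance, Int.cast_natCast]⟩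
  · exact ⟨0, by rw [hentry, negPart_of_nonneg hnonneg, Int.cast_zero, zero_mul]⟩

end IsOptimalCover

end OrderTwo

/-- For an extremal matrix of order 2 of diversity at most 2: the deficiency is 1/q,
the optimal hyperplane cover is unique, and all of its entries are integer multiples of the
deficiency. -/
theorem stmt_18 {d : ℕ} (A : (Fin d → Fin 2) → Bool) (hA : IsExtremal A)
    (hdiv : ∃ Λ₀ : Fin d → Fin 2 → ℝ, IsOptimalCover A Λ₀ ∧
      ∃ u v : ℝ, ∀ i j, 0 < Λ₀ i j → (Λ₀ i j = u ∨ Λ₀ i j = v)) :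
    (∀ W : ℝ, IsGreatest {W' | ∃ k, IsPolyplex A k W'} W →
      ∃ q : ℕ, 0 < q ∧ 2 - W = 1 / (q : ℝ)) ∧
    (∀ Λ Λ' : Fin d → Fin 2 → ℝ, IsOptimalCover A Λ → IsOptimalCover A Λ' → Λ = Λ') ∧
    (∀ W : ℝ, IsGreatest {W' | ∃ k, IsPolyplex A k W'} W →
      ∀ Λ : Fin d → Fin 2 → ℝ, IsOptimalCover A Λ →
        ∀ i j, ∃ m : ℤ, Λ i j = (m : ℝ) * (2 - W)) := by
  obtain ⟨Λ₀, hΛ₀, u, v, huv⟩ := hdiv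
  choose c hc using fun i ↦ Finite.exists_max (Λ₀ i)
  obtain ⟨G, H, a, b, hw⟩ := hΛ₀.exists_isTwoLevel_normalizedImbalance
    (hΛ₀.coverWeight_lt hA.1) hc huv
  have huniq : ∀ Λ, IsOptimalCover A Λ → Λ = Λ₀ := fun Λ hΛ ↦ hΛ₀.eq_of_isTwoLevel hA hw hΛ
  refine ⟨fun W hW ↦ ?_, fun Λ Λ' hΛ hΛ' ↦ (huniq Λ hΛ).trans (huniq Λ' hΛ').symm,
    fun W hW Λ hΛ i j ↦ ?_⟩
  · rw [← hΛ₀.coverWeight_eq hW]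
    exact hΛ₀.exists_nat_deficiency_eq hA hw
  · rw [huniq Λ hΛ, ← hΛ₀.coverWeight_eq hW]
    exact hΛ₀.exists_int_eq_mul_deficiency hA hw i j
end

section
/- A 2-dimensional (0,1)-matrix A of order n is extremal if and only if there exist a set S of rows and a set T of columns with |S| + |T| = n + 1 such that the set of zero entries of A is exactly S × T, i.e., A(i,j) = 0 ⟺ (i ∈ S and j ∈ T). (This characterization is equivalent to the König–Hall–Egerváry theorem.) -/
open Finset

/-!
In dimension two a polydiagonal is a doubly stochastic matrix, and by Hall's theorem a doubly
stochastic matrix (even a permutation matrix) vanishing on a set `Z` of positions exists iff every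
block `S ×ˢ T ⊆ Z` satisfies `#S + #T ≤ n`. Hence `A` is extremal iff its set of zeros is minimal
among the sets containing a block with `#S + #T > n`. A minimal such set is itself a block, and
deleting one row from it shows that `#S + #T = n + 1`. Conversely, a nonempty block strictly
contained in `S ×ˢ T` loses a row or a column.
-/

section Blocks

variable {α β : Type*}

/-- The Frobenius–König condition: every block `S ×ˢ T` contained in the set of positions `Z` has
at most `N` rows and columns altogether. -/
def FrobeniusKonig (Z : Finset (α × β)) (N : ℕ) : Prop :=
  ∀ S T, S ×ˢ T ⊆ Z → #S + #T ≤ N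

theorem card_add_card_lt_of_product_ssubset {S S' : Finset α} {T T' : Finset β}
    (hS' : S'.Nonempty) (hT' : T'.Nonempty) (h : S' ×ˢ T' ⊂ S ×ˢ T) :
    #S' + #T' < #S + #T := by
  have hS : S' ⊆ S := fun i hi ↦
    let ⟨_, hj⟩ := hT'
    (mem_product.1 (h.subset (mk_mem_product hi hj))).1
  have hT : T' ⊆ T := fun j hj ↦
    let ⟨_, hi⟩ := hS'
    (mem_product.1 (h.subset (mk_mem_product hi hj))).2
  rcases hS.eq_or_ssubset with rfl | hS_lt
  · have hT_lt : T' ⊂ T := hT.ssubset_of_ne (by rintro rfl; exact h.ne rfl)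
    exact Nat.add_lt_add_left (card_lt_card hT_lt) _
  · exact Nat.add_lt_add_of_lt_of_le (card_lt_card hS_lt) (card_le_card hT)

theorem frobeniusKonig_of_ssubset_product [Fintype α] [Fintype β] {N : ℕ}
    (hα : Fintype.card α ≤ N) (hβ : Fintype.card β ≤ N) {Z : Finset (α × β)} {S : Finset α}
    {T : Finset β} (hcard : #S + #T ≤ N + 1) (hZ : Z ⊂ S ×ˢ T) : FrobeniusKonig Z N := by
  intro S' T' hblock
  rcases S'.eq_empty_or_nonempty with rfl | hS'
  · simpa using (card_le_univ T').trans hβ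
  rcases T'.eq_empty_or_nonempty with rfl | hT'
  · simpa using (card_le_univ S').trans hα
  have := card_add_card_lt_of_product_ssubset hS' hT' (hblock.trans_ssubset hZ)
  omega

theorem FrobeniusKonig.exists_injective [Fintype β] {Z : Finset (α × β)}
    (hZ : FrobeniusKonig Z (Fintype.card β)) :
    ∃ f : α → β, Function.Injective f ∧ ∀ i, (i, f i) ∉ Z := by
  classical
  refine (Fintype.all_card_le_filter_rel_iff_exists_injective fun i j ↦ (i, j) ∉ Z).1 fun S ↦ ?_
  set neighbours : Finset β := {j | ∃ i ∈ S, (i, j) ∉ Z}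
  have hblock : S ×ˢ neighboursᶜ ⊆ Z := by
    rintro ⟨i, j⟩ hij
    by_contra hijZ
    obtain ⟨hi, hj⟩ := mem_product.1 hij
    exact mem_compl.1 hj (mem_filter.2 ⟨mem_univ j, i, hi, hijZ⟩)
  have := hZ S neighboursᶜ hblock
  have := card_add_card_compl neighbours
  omega

variable [DecidableEq α] [DecidableEq β]

theorem eq_product_of_forall_frobeniusKonig_erase {Z : Finset (α × β)} {N : ℕ}
    (hZ : ∀ p ∈ Z, FrobeniusKonig (Z.erase p) N) {S : Finset α} {T : Finset β}
    (hblock : S ×ˢ T ⊆ Z) (hcard : N < #S + #T) : Z = S ×ˢ T := by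
  refine Subset.antisymm (fun p hp ↦ ?_) hblock
  by_contra hpST
  exact hcard.not_ge (hZ p hp S T (subset_erase.2 ⟨hblock, hpST⟩))

theorem card_add_card_le_succ_of_forall_frobeniusKonig_erase {Z : Finset (α × β)} {N : ℕ}
    (hZ : ∀ p ∈ Z, FrobeniusKonig (Z.erase p) N) {S : Finset α} {T : Finset β}
    (hS : S.Nonempty) (hT : T.Nonempty) (hblock : S ×ˢ T ⊆ Z) : #S + #T ≤ N + 1 := by
  obtain ⟨a, ha⟩ := hS
  obtain ⟨b, hb⟩ := hT
  have hsmaller : S.erase a ×ˢ T ⊆ Z.erase (a, b) :=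
    subset_erase.2 ⟨(product_subset_product_left (erase_subset a S)).trans hblock, by simp⟩
  have hle := hZ (a, b) (hblock (mk_mem_product ha hb)) _ _ hsmaller
  have := card_erase_add_one ha
  omega

theorem not_frobeniusKonig_and_forall_erase_iff [Fintype α] [Fintype β] {N : ℕ}
    (hα : Fintype.card α ≤ N) (hβ : Fintype.card β ≤ N) (Z : Finset (α × β)) :
    (¬ FrobeniusKonig Z N ∧ ∀ p ∈ Z, FrobeniusKonig (Z.erase p) N) ↔
      ∃ S T, #S + #T = N + 1 ∧ Z = S ×ˢ T := by
  constructor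
  · rintro ⟨hnot, herase⟩
    obtain ⟨S, T, hblock, hcard⟩ : ∃ S T, S ×ˢ T ⊆ Z ∧ N < #S + #T := by
      simpa only [FrobeniusKonig, not_forall, not_le, exists_prop] using hnot
    have hS : S.Nonempty := card_pos.1 (by have := (card_le_univ T).trans hβ; omega)
    have hT : T.Nonempty := card_pos.1 (by have := (card_le_univ S).trans hα; omega)
    have hle := card_add_card_le_succ_of_forall_frobeniusKonig_erase herase hS hT hblock
    exact ⟨S, T, le_antisymm hle hcard,
      eq_product_of_forall_frobeniusKonig_erase herase hblock hcard⟩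
  · rintro ⟨S, T, hcard, rfl⟩
    refine ⟨fun h ↦ ?_, fun p hp ↦
      frobeniusKonig_of_ssubset_product hα hβ hcard.le (erase_ssubset hp)⟩
    have := h S T subset_rfl
    omega

end Blocks

section DoublyStochastic

variable {R ι : Type*} [Fintype ι] [DecidableEq ι] [Semiring R] [PartialOrder R] [IsOrderedRing R]

theorem card_add_card_le_of_mem_doublyStochastic [CharZero R] {M : Matrix ι ι R}
    (hM : M ∈ doublyStochastic R ι) {S T : Finset ι} (hzero : ∀ i ∈ S, ∀ j ∈ T, M i j = 0) :
    #S + #T ≤ Fintype.card ι := by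
  have hrow (i : ι) (hi : i ∈ S) : ∑ j ∈ Tᶜ, M i j = 1 := by
    rw [← sum_row_of_mem_doublyStochastic hM i, ← sum_add_sum_compl T,
      sum_eq_zero (hzero i hi), zero_add]
  have hcol (j : ι) : ∑ i ∈ S, M i j ≤ 1 := by
    rw [← sum_col_of_mem_doublyStochastic hM j]
    exact sum_le_univ_sum_of_nonneg fun i ↦ nonneg_of_mem_doublyStochastic hM
  have hcast : (#S : R) ≤ #Tᶜ :=
    calc (#S : R) = ∑ i ∈ S, ∑ j ∈ Tᶜ, M i j := by simp [sum_congr rfl hrow]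
      _ = ∑ j ∈ Tᶜ, ∑ i ∈ S, M i j := sum_comm
      _ ≤ ∑ j ∈ Tᶜ, 1 := sum_le_sum fun j _ ↦ hcol j
      _ = #Tᶜ := by simp
  have hle : #S ≤ #Tᶜ := Nat.cast_le.1 hcast
  have := card_add_card_compl T
  omega

variable (R) in
theorem exists_doublyStochastic_vanishing_iff_frobeniusKonig [CharZero R] (Z : Finset (ι × ι)) :
    (∃ M ∈ doublyStochastic R ι, ∀ p ∈ Z, M p.1 p.2 = 0) ↔
      FrobeniusKonig Z (Fintype.card ι) := by
  constructor
  · rintro ⟨M, hM, hzero⟩ S T hblock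
    exact card_add_card_le_of_mem_doublyStochastic hM fun i hi j hj ↦
      hzero (i, j) (hblock (mk_mem_product hi hj))
  · intro hZ
    obtain ⟨f, hf, hfZ⟩ := hZ.exists_injective
    let σ : Equiv.Perm ι := .ofBijective f (Finite.injective_iff_bijective.1 hf)
    refine ⟨σ.permMatrix R, permMatrix_mem_doublyStochastic, ?_⟩
    rintro ⟨i, j⟩ hij
    have hne : f i ≠ j := by rintro rfl; exact hfZ i hij
    simpa [σ, Equiv.Perm.permMatrix, PEquiv.toMatrix_apply, Equiv.toPEquiv_apply] using hne

end DoublyStochastic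

section TwoDimensional

variable {n : ℕ}

theorem hypSum_zero_eq_sum_row (k : (Fin 2 → Fin n) → ℝ) (i : Fin n) :
    hypSum k 0 i = ∑ j, k ![i, j] := by
  rw [hypSum, sum_filter, ← (finTwoArrowEquiv (Fin n)).symm.sum_comp, Fintype.sum_prod_type_right]
  simp

theorem hypSum_one_eq_sum_col (k : (Fin 2 → Fin n) → ℝ) (j : Fin n) :
    hypSum k 1 j = ∑ i, k ![i, j] := by
  rw [hypSum, sum_filter, ← (finTwoArrowEquiv (Fin n)).symm.sum_comp, Fintype.sum_prod_type]
  simp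

/-- The positions of the zero entries of a two-dimensional matrix, as (row, column) pairs. -/
def zeroEntries (A : (Fin 2 → Fin n) → Bool) : Finset (Fin n × Fin n) :=
  {p | A ![p.1, p.2] = false}

theorem mem_zeroEntries {A : (Fin 2 → Fin n) → Bool} {p : Fin n × Fin n} :
    p ∈ zeroEntries A ↔ A ![p.1, p.2] = false := by
  simp [zeroEntries]

theorem forall_eq_false_iff_forall_mem_zeroEntries {A : (Fin 2 → Fin n) → Bool}
    {P : (Fin 2 → Fin n) → Prop} :
    (∀ α, A α = false → P α) ↔ ∀ p ∈ zeroEntries A, P ![p.1, p.2] := by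
  simp only [mem_zeroEntries]
  exact ((finTwoArrowEquiv (Fin n)).symm.forall_congr_right
    (q := fun α ↦ A α = false → P α)).symm

theorem zeroEntries_addEntry (A : (Fin 2 → Fin n) → Bool) (p : Fin n × Fin n) :
    zeroEntries (addEntry A ![p.1, p.2]) = (zeroEntries A).erase p := by
  ext q
  have hvec : ![q.1, q.2] = ![p.1, p.2] ↔ q = p := (finTwoArrowEquiv (Fin n)).symm.apply_eq_iff_eq
  simp [mem_zeroEntries, addEntry, hvec]

theorem isPolydiagonal_iff_mem_doublyStochastic {A : (Fin 2 → Fin n) → Bool}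
    {k : (Fin 2 → Fin n) → ℝ} :
    IsPolydiagonal A k ↔ Matrix.of (fun i j ↦ k ![i, j]) ∈ doublyStochastic ℝ (Fin n) ∧
      ∀ p ∈ zeroEntries A, k ![p.1, p.2] = 0 := by
  have hnonneg : (∀ α, 0 ≤ k α) ↔ ∀ i j, 0 ≤ k ![i, j] := by
    rw [← (finTwoArrowEquiv (Fin n)).symm.forall_congr_right, Prod.forall]
    rfl
  simp only [IsPolydiagonal, hnonneg, forall_eq_false_iff_forall_mem_zeroEntries,
    Fin.forall_fin_two, hypSum_zero_eq_sum_row, hypSum_one_eq_sum_col,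
    mem_doublyStochastic_iff_sum, Matrix.of_apply]
  tauto

theorem hasPolydiagonal_iff_frobeniusKonig (A : (Fin 2 → Fin n) → Bool) :
    HasPolydiagonal A ↔ FrobeniusKonig (zeroEntries A) n := by
  have hKonig := exists_doublyStochastic_vanishing_iff_frobeniusKonig ℝ (zeroEntries A)
  rw [Fintype.card_fin] at hKonig
  rw [← hKonig]
  constructor
  · rintro ⟨k, hk⟩
    exact ⟨_, isPolydiagonal_iff_mem_doublyStochastic.1 hk⟩
  · rintro ⟨M, hM⟩
    exact ⟨fun α ↦ M (α 0) (α 1), isPolydiagonal_iff_mem_doublyStochastic.2 hM⟩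

theorem isExtremal_iff_frobeniusKonig (A : (Fin 2 → Fin n) → Bool) :
    IsExtremal A ↔ ¬ FrobeniusKonig (zeroEntries A) n ∧
      ∀ p ∈ zeroEntries A, FrobeniusKonig ((zeroEntries A).erase p) n := by
  simp only [IsExtremal, forall_eq_false_iff_forall_mem_zeroEntries,
    hasPolydiagonal_iff_frobeniusKonig, zeroEntries_addEntry]

theorem zeroEntries_eq_product_iff {A : (Fin 2 → Fin n) → Bool} {S T : Finset (Fin n)} :
    zeroEntries A = S ×ˢ T ↔ ∀ i j, A ![i, j] = false ↔ i ∈ S ∧ j ∈ T := by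
  simp only [Finset.ext_iff, Prod.forall, mem_zeroEntries, mem_product]

end TwoDimensional

/-- A 2-dimensional matrix of order n is extremal iff its zero entries form an S × T
submatrix with |S| + |T| = n + 1 (the König–Hall–Egerváry theorem). -/
theorem stmt_19 {n : ℕ} (A : (Fin 2 → Fin n) → Bool) :
    IsExtremal A ↔ ∃ S T : Finset (Fin n), S.card + T.card = n + 1 ∧
      ∀ i j : Fin n, (A ![i, j] = false ↔ (i ∈ S ∧ j ∈ T)) := by
  have hcard : Fintype.card (Fin n) ≤ n := (Fintype.card_fin n).le
  rw [isExtremal_iff_frobeniusKonig, not_frobeniusKonig_and_forall_erase_iff hcard hcard]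
  simp only [zeroEntries_eq_product_iff]
end
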